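/- arXiv:1507.08247 — 2 statements merged into one kernel-verified Lean document; each statement's English description precedes it below -/
import Mathlib

section
/- Let 1 < s < 2 and write s = 1 + t with 0 < t < 1. There exists a constant C_{BH}, depending only on s, such that every φ ∈ H¹(T̂) with |φ|_{1+t,T̂} < ∞ that admits a representative continuous on the closure of T̂ which vanishes at the three points (0,0), (1,0) and (0,1) satisfies ‖φ‖²_{L²(T̂)} + ‖∇φ‖²_{L²(T̂)} + |φ|²_{1+t,T̂} ≤ C²_{BH} · |φ|²_{1+t,T̂}. -/
open MeasureTheory Metric Set Filter
open scoped Topology NNReal ENNReal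

noncomputable section

abbrev E2 := EuclideanSpace ℝ (Fin 2)

/-- Squared Gagliardo seminorm of order `s` on `G ⊆ ℝ²`. -/
def gagSq (s : ℝ) (G : Set E2) (v : E2 → ℝ) : ℝ :=
  ∫ x in G, ∫ y in G, (v x - v y) ^ 2 / dist x y ^ (2 + 2 * s)

/-- Finiteness of the Gagliardo seminorm. -/
def GagFin (s : ℝ) (G : Set E2) (v : E2 → ℝ) : Prop :=
  Integrable (fun p : E2 × E2 => (v p.1 - v p.2) ^ 2 / dist p.1 p.2 ^ (2 + 2 * s))
    ((volume.restrict G).prod (volume.restrict G))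

/-- Test functions: smooth compactly supported functions with support in `G`. -/
def IsTestFun (G : Set E2) (φ : E2 → ℝ) : Prop :=
  ContDiff ℝ (⊤ : ℕ∞) φ ∧ HasCompactSupport φ ∧ tsupport φ ⊆ G

/-- Partial derivative in the `i`-th coordinate direction. -/
def pd (i : Fin 2) (f : E2 → ℝ) (x : E2) : ℝ := fderiv ℝ f x (EuclideanSpace.single i 1)

/-- Weak partial derivative on an open set. -/
def HasWeakPD (G : Set E2) (i : Fin 2) (v g : E2 → ℝ) : Prop :=
  ∀ φ : E2 → ℝ, IsTestFun G φ →
    (∫ x in G, v x * pd i φ x) = - ∫ x in G, g x * φ x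

/-- The open reference triangle with vertices `(0,0)`, `(1,0)`, `(0,1)`. -/
def refTri : Set E2 := {x : E2 | 0 < x 0 ∧ 0 < x 1 ∧ x 0 + x 1 < 1}

/-! ### Geometry of the reference triangle -/

lemma tri_measurable : MeasurableSet refTri := by
  have h0 : Continuous fun x : E2 => x 0 := by fun_prop
  have h1 : Continuous fun x : E2 => x 1 := by fun_prop
  exact ((isOpen_lt continuous_const h0).inter ((isOpen_lt continuous_const h1).inter
    (isOpen_lt (h0.add h1) continuous_const))).measurableSet

lemma tri_closure {z : E2} (hz : z ∈ closure refTri) : 0 ≤ z 0 ∧ 0 ≤ z 1 ∧ z 0 + z 1 ≤ 1 := by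
  have h0 : Continuous fun x : E2 => x 0 := by fun_prop
  have h1 : Continuous fun x : E2 => x 1 := by fun_prop
  have hc : IsClosed {z : E2 | 0 ≤ z 0 ∧ 0 ≤ z 1 ∧ z 0 + z 1 ≤ 1} :=
    (isClosed_le continuous_const h0).inter ((isClosed_le continuous_const h1).inter
    (isClosed_le (h0.add h1) continuous_const))
  have hsub : refTri ⊆ {z : E2 | 0 ≤ z 0 ∧ 0 ≤ z 1 ∧ z 0 + z 1 ≤ 1} :=
    fun x hx => ⟨hx.1.le, hx.2.1.le, hx.2.2.le⟩
  exact closure_minimal hsub hc hz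

lemma tri_norm {y z : E2} (hy : y ∈ closure refTri) (hz : z ∈ closure refTri) :
    ‖y - z‖ ≤ 2 := by
  obtain ⟨a, b, c⟩ := tri_closure hy
  obtain ⟨d, e, f⟩ := tri_closure hz
  rw [EuclideanSpace.norm_eq, Real.sqrt_le_left (by norm_num)]
  simp only [Fin.sum_univ_two, PiLp.sub_apply, Real.norm_eq_abs, sq_abs]
  nlinarith

lemma tri_coord {y z : E2} (hy : y ∈ closure refTri) (hz : z ∈ closure refTri) (i : Fin 2) :
    |y i - z i| ≤ 2 := by
  have := (EuclideanSpace.norm_eq (y - z))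
  have h := PiLp.norm_apply_le (y - z) i
  have := tri_norm hy hz
  rw [Real.norm_eq_abs, PiLp.sub_apply] at h
  linarith

lemma tri_compact : IsCompact (closure refTri) := by
  refine Metric.isCompact_of_isClosed_isBounded isClosed_closure ?_
  rw [Metric.isBounded_iff]
  exact ⟨2, fun x hx y hy => by rw [dist_eq_norm]; exact tri_norm hx hy⟩

lemma tri_segment {y z : E2} (hz : z ∈ closure refTri) {u : ℝ} (hu : 1 ≤ u)
    (hy : z + u • (y - z) ∈ refTri) : y ∈ refTri := by
  obtain ⟨a, b, c⟩ := tri_closure hz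
  obtain ⟨d, e, f⟩ := hy
  simp only [PiLp.add_apply, PiLp.smul_apply, PiLp.sub_apply, smul_eq_mul] at d e f
  refine ⟨?_, ?_, ?_⟩ <;> nlinarith

lemma vert0 : (0 : E2) ∈ closure refTri ∧ (∀ i, EuclideanSpace.single i (1:ℝ) ∈ closure refTri) := by
  have key : ∀ z : E2, 0 ≤ z 0 → 0 ≤ z 1 → z 0 + z 1 ≤ 1 → z ∈ closure refTri := by
    intro z h0 h1 h2
    let p : E2 := !₂[1/4, 1/4]
    have hc : Tendsto (fun n : ℕ => z + ((1:ℝ) / ((n:ℝ) + 1)) • (p - z)) atTop (𝓝 (z + (0:ℝ) • (p - z))) := by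
      refine tendsto_const_nhds.add (Tendsto.smul_const ?_ _)
      exact tendsto_one_div_add_atTop_nhds_zero_nat
    rw [zero_smul, add_zero] at hc
    refine mem_closure_of_tendsto hc (Eventually.of_forall fun n => ?_)
    have hn : (0:ℝ) < 1 / ((n:ℝ) + 1) := by positivity
    have hn1 : (1:ℝ) / ((n:ℝ) + 1) ≤ 1 := by
      rw [div_le_one (by positivity)]; linarith [Nat.cast_nonneg (α := ℝ) n]
    generalize (1:ℝ) / ((n:ℝ) + 1) = l at *
    have p0 : p 0 = 1/4 := rfl
    have p1 : p 1 = 1/4 := rfl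
    refine ⟨?_, ?_, ?_⟩ <;>
      simp only [PiLp.add_apply, PiLp.smul_apply, PiLp.sub_apply, smul_eq_mul, p0, p1] <;> nlinarith
  refine ⟨key _ (by simp) (by simp) (by simp), fun i => ?_⟩
  fin_cases i <;> exact key _ (by simp) (by simp) (by simp)

/-- the restricted measure -/
abbrev mT : Measure E2 := volume.restrict refTri

instance : IsFiniteMeasure mT :=
  ⟨by rw [Measure.restrict_apply_univ]
      exact (measure_mono subset_closure).trans_lt tri_compact.measure_lt_top⟩

lemma tri_integrable {f : E2 → ℝ} (hf : Continuous f) : Integrable f mT :=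
  (hf.continuousOn.integrableOn_compact tri_compact).mono_set subset_closure

lemma tri_integrable2 {f : E2 × E2 → ℝ} (hf : Continuous f) : Integrable f (mT.prod mT) := by
  rw [Measure.prod_restrict]
  exact (hf.continuousOn.integrableOn_compact (tri_compact.prod tri_compact)).mono_set
    (prod_mono subset_closure subset_closure)

lemma tri_mul_integrable {f g : E2 → ℝ} (hf : Continuous f) (hg : MemLp g 2 mT) :
    Integrable (fun x => f x * g x) mT := by
  obtain ⟨M, hM⟩ := tri_compact.exists_bound_of_continuousOn hf.continuousOn
  refine (hg.integrable (by norm_num)).bdd_mul (c := M) hf.aestronglyMeasurable ?_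
  filter_upwards [ae_restrict_mem tri_measurable] with x hx using hM x (subset_closure hx)

lemma cs_sq {α : Type*} [MeasurableSpace α] {P : Measure α} {f h : α → ℝ}
    (hf : Integrable (fun x => f x ^ 2) P) (hh : Integrable (fun x => h x ^ 2) P)
    (hfh : Integrable (fun x => f x * h x) P) :
    (∫ x, f x * h x ∂P) ^ 2 ≤ (∫ x, f x ^ 2 ∂P) * ∫ x, h x ^ 2 ∂P := by
  have key : ∀ τ : ℝ, 0 ≤ (∫ x, f x ^ 2 ∂P) * (τ * τ) + (2 * ∫ x, f x * h x ∂P) * τ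
      + ∫ x, h x ^ 2 ∂P := by
    intro τ
    have : 0 ≤ ∫ x, (τ * f x + h x) ^ 2 ∂P := integral_nonneg fun x => sq_nonneg _
    have e : ∫ x, (τ * f x + h x) ^ 2 ∂P =
        ∫ x, ((τ * τ) * f x ^ 2 + (2 * τ) * (f x * h x)) + h x ^ 2 ∂P := by
      congr 1; ext x; ring
    have hadd : Integrable (fun x => (τ * τ) * f x ^ 2 + (2 * τ) * (f x * h x)) P :=
      (hf.const_mul _).add (hfh.const_mul _)
    rw [e, integral_add hadd hh, integral_add (hf.const_mul _) (hfh.const_mul _), integral_const_mul, integral_const_mul] at this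
    linarith
  have := discrim_le_zero key
  unfold discrim at this
  nlinarith

lemma gagSq_eq {t : ℝ} {g : E2 → ℝ} (hg : GagFin t refTri g) :
    gagSq t refTri g = ∫ p, (g p.1 - g p.2) ^ 2 / dist p.1 p.2 ^ (2 + 2 * t) ∂(mT.prod mT) := by
  rw [integral_prod _ hg]; rfl

lemma gagSq_nonneg (t : ℝ) (g : E2 → ℝ) : 0 ≤ gagSq t refTri g :=
  integral_nonneg fun x => integral_nonneg fun y => by positivity

/-- Kernel comparison lemma. -/
lemma kernel_cmp {t : ℝ} (ht : 0 < t) {g K L : E2 → ℝ} (hg : MemLp g 2 mT)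
    (hG : GagFin t refTri g) (hK : Continuous K) (hL : Continuous L) (hL1 : ∫ x, L x ∂mT = 1)
    {r : ℝ}
    (hd : ∀ x ∈ refTri, ∀ y ∈ refTri, K x ≠ 0 → L y ≠ 0 → dist x y ≤ r) :
    ((∫ x, K x * g x ∂mT) - (∫ x, K x ∂mT) * ∫ x, L x * g x ∂mT) ^ 2 ≤
      (r ^ (1 + t)) ^ 2 * ((∫ x, K x ^ 2 ∂mT) * ∫ x, L x ^ 2 ∂mT) * gagSq t refTri g := by
  have hKg := tri_mul_integrable hK hg
  have hLg := tri_mul_integrable hL hg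
  have i1 := hKg.mul_prod (tri_integrable hL)
  have i2 := (tri_integrable hK).mul_prod hLg
  set F : E2 × E2 → ℝ := fun p => K p.1 * L p.2 * dist p.1 p.2 ^ (1 + t) with hF
  set H : E2 × E2 → ℝ := fun p => (g p.1 - g p.2) / dist p.1 p.2 ^ (1 + t) with hH
  have hFc : Continuous F := by
    have : Continuous fun p : E2 × E2 => dist p.1 p.2 ^ (1 + t) :=
      continuous_dist.rpow_const fun _ => Or.inr (by linarith)
    fun_prop
  have hFH : ∀ p, F p * H p = K p.1 * g p.1 * L p.2 - K p.1 * (L p.2 * g p.2) := by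
    intro p
    simp only [hF, hH]
    by_cases h : p.1 = p.2
    · simp [h]; ring
    · have : dist p.1 p.2 ^ (1 + t) ≠ 0 := (Real.rpow_pos_of_pos (dist_pos.2 h) _).ne'
      field_simp
  have hH2 : ∀ p, H p ^ 2 = (g p.1 - g p.2) ^ 2 / dist p.1 p.2 ^ (2 + 2 * t) := by
    intro p
    simp only [hH, div_pow]
    rw [← Real.rpow_mul_natCast dist_nonneg]; congr 2; push_cast; ring
  have iFH : Integrable (fun p => F p * H p) (mT.prod mT) := by
    simp_rw [hFH]; exact i1.sub i2
  have iH : Integrable (fun p => H p ^ 2) (mT.prod mT) := by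
    simp_rw [hH2]; exact hG
  have iF : Integrable (fun p => F p ^ 2) (mT.prod mT) := tri_integrable2 (hFc.pow 2)
  have cs := cs_sq iF iH iFH
  have e1 : ∫ p, F p * H p ∂(mT.prod mT) =
      (∫ x, K x * g x ∂mT) - (∫ x, K x ∂mT) * ∫ x, L x * g x ∂mT := by
    simp_rw [hFH]
    rw [integral_sub i1 i2, integral_prod_mul (fun x => K x * g x) L,
      integral_prod_mul K (fun x => L x * g x), hL1, mul_one]
  have e2 : ∫ p, H p ^ 2 ∂(mT.prod mT) = gagSq t refTri g := by
    rw [gagSq_eq hG]; simp_rw [hH2]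
  have e3 : ∫ p, F p ^ 2 ∂(mT.prod mT) ≤
      (r ^ (1 + t)) ^ 2 * ((∫ x, K x ^ 2 ∂mT) * ∫ x, L x ^ 2 ∂mT) := by
    rw [← integral_prod_mul (fun x => K x ^ 2) (fun x => L x ^ 2), ← integral_const_mul]
    refine integral_mono_ae iF (((tri_integrable (hK.pow 2)).mul_prod
      (tri_integrable (hL.pow 2))).const_mul _) ?_
    have hm : ∀ᵐ p ∂(mT.prod mT), p ∈ refTri ×ˢ refTri := by
      rw [Measure.prod_restrict]
      exact ae_restrict_mem (tri_measurable.prod tri_measurable)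
    filter_upwards [hm] with p hp
    by_cases hk : K p.1 = 0
    · simp [hF, hk]
    by_cases hl : L p.2 = 0
    · simp [hF, hl]
    have := Real.rpow_le_rpow dist_nonneg (hd _ hp.1 _ hp.2 hk hl) (by linarith : 0 ≤ 1 + t)
    have h2 := pow_le_pow_left₀ (Real.rpow_nonneg dist_nonneg _) this 2
    simp only [hF]
    calc _ = (dist p.1 p.2 ^ (1 + t)) ^ 2 * (K p.1 ^ 2 * L p.2 ^ 2) := by ring
      _ ≤ _ := by gcongr
  rw [e1, e2] at cs
  exact cs.trans (mul_le_mul_of_nonneg_right e3 (gagSq_nonneg _ _))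

/-- A mollifier living in the triangle. -/
structure Mol (η : E2 → ℝ) : Prop where
  smooth : ContDiff ℝ (⊤ : ℕ∞) η
  cpt : HasCompactSupport η
  supp : tsupport η ⊆ refTri
  nonneg : ∀ x, 0 ≤ η x
  int_one : ∫ x, η x = 1

lemma exists_mol : ∃ η, Mol η := by
  let p : E2 := !₂[1/4, 1/4]
  let f : ContDiffBump p := ⟨1/16, 1/8, by norm_num, by norm_num⟩
  refine ⟨f.normed volume, f.contDiff_normed, f.hasCompactSupport_normed, ?_,
    f.nonneg_normed, f.integral_normed⟩
  rw [f.tsupport_normed_eq]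
  intro x hx
  rw [Metric.mem_closedBall, dist_eq_norm] at hx
  have p0 : p 0 = 1/4 := rfl
  have p1 : p 1 = 1/4 := rfl
  have h0 := (PiLp.norm_apply_le (x - p) 0).trans hx
  have h1 := (PiLp.norm_apply_le (x - p) 1).trans hx
  rw [PiLp.sub_apply, Real.norm_eq_abs, abs_le] at h0 h1
  have hf : f.rOut = 1/8 := rfl
  rw [p0, hf] at h0
  rw [p1, hf] at h1
  exact ⟨by linarith, by linarith, by linarith⟩

lemma Mol.cont {η : E2 → ℝ} (h : Mol η) : Continuous η := h.smooth.continuous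

lemma Mol.mem {η : E2 → ℝ} (h : Mol η) {x : E2} (hx : η x ≠ 0) : x ∈ refTri :=
  h.supp (subset_tsupport _ hx)

lemma int_tri {f : E2 → ℝ} (hf : ∀ x, f x ≠ 0 → x ∈ refTri) : ∫ x, f x ∂mT = ∫ x, f x :=
  setIntegral_eq_integral_of_forall_compl_eq_zero fun x hx => by
    by_contra h; exact hx (hf x h)

lemma int_scale {f : E2 → ℝ} (hf : ∀ x, f x ≠ 0 → x ∈ refTri) {z : E2}
    (hz : z ∈ closure refTri) {u : ℝ} (hu : 1 ≤ u) :
    ∫ x, f (z + u • (x - z)) ∂mT = (u ^ 2)⁻¹ * ∫ x, f x ∂mT := by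
  rw [int_tri hf, int_tri (fun x hx => tri_segment hz hu (hf _ hx))]
  rw [integral_sub_right_eq_self (fun x => f (z + u • x)) z,
    Measure.integral_comp_smul volume (fun x => f (z + x)) u,
    integral_add_left_eq_self f z]
  rw [abs_of_nonneg (by positivity)]
  simp

/-- scaled mollifier -/
def eta (η : E2 → ℝ) (z : E2) (u : ℝ) (x : E2) : ℝ := u ^ 2 * η (z + u • (x - z))

/-- moment kernel -/
def theta (η : E2 → ℝ) (z : E2) (u : ℝ) (i : Fin 2) (x : E2) : ℝ :=
  (x i - z i) * (u * η (z + u • (x - z)))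

lemma theta_eq (η : E2 → ℝ) (z : E2) (u : ℝ) (i : Fin 2) (x : E2) : theta η z u i x =
    (fun y : E2 => (y i - z i) * η y) (z + u • (x - z)) := by
  simp [theta]; ring

lemma Mol.eta_cont {η : E2 → ℝ} (h : Mol η) {z : E2}
    (u : ℝ) : Continuous (eta η z u) := by
  have := h.cont
  unfold eta; fun_prop

lemma Mol.theta_cont {η : E2 → ℝ} (h : Mol η) {z : E2}
    (u : ℝ) (i : Fin 2) : Continuous (theta η z u i) := by
  have := h.cont
  unfold theta; fun_prop

lemma Mol.near {η : E2 → ℝ} (h : Mol η) {z : E2} (hz : z ∈ closure refTri)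
    {u : ℝ} (hu : 1 ≤ u) {x : E2} (hx : η (z + u • (x - z)) ≠ 0) :
    dist x z ≤ 2 / u := by
  have h1 := tri_norm (subset_closure (h.mem hx)) hz
  rw [add_sub_cancel_left, norm_smul, Real.norm_of_nonneg (by linarith)] at h1
  rw [dist_eq_norm, le_div_iff₀ (by linarith)]
  linarith

lemma Mol.int_eta {η : E2 → ℝ} (h : Mol η) {z : E2} (hz : z ∈ closure refTri)
    {u : ℝ} (hu : 1 ≤ u) : ∫ x, eta η z u x ∂mT = 1 := by
  unfold eta
  rw [integral_const_mul, int_scale (fun x hx => h.mem hx) hz hu, int_tri (fun x hx => h.mem hx),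
    h.int_one]
  have : u ≠ 0 := by linarith
  field_simp

lemma Mol.int_eta_sq {η : E2 → ℝ} (h : Mol η) {z : E2} (hz : z ∈ closure refTri)
    {u : ℝ} (hu : 1 ≤ u) :
    ∫ x, eta η z u x ^ 2 ∂mT = u ^ 2 * ∫ x, η x ^ 2 ∂mT := by
  have hs := int_scale (f := fun x => η x ^ 2) (fun x hx => h.mem (by
    intro h0; simp [h0] at hx)) hz hu
  have : u ≠ 0 := by linarith
  unfold eta
  simp_rw [mul_pow]
  rw [integral_const_mul, hs]
  field_simp

lemma Mol.int_theta {η : E2 → ℝ} (h : Mol η) {z : E2} (hz : z ∈ closure refTri)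
    {u : ℝ} (hu : 1 ≤ u) (i : Fin 2) :
    ∫ x, theta η z u i x ∂mT = (u ^ 2)⁻¹ * ∫ y, (y i - z i) * η y ∂mT := by
  simp_rw [theta_eq]
  rw [int_scale (f := fun y : E2 => (y i - z i) * η y) _ hz hu]
  intro x hx
  exact h.mem (right_ne_zero_of_mul hx)

lemma Mol.int_theta_sq {η : E2 → ℝ} (h : Mol η) {z : E2} (hz : z ∈ closure refTri)
    {u : ℝ} (hu : 1 ≤ u) (i : Fin 2) :
    ∫ x, theta η z u i x ^ 2 ∂mT ≤ (u ^ 2)⁻¹ * (4 * ∫ y, η y ^ 2 ∂mT) := by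
  simp_rw [theta_eq]
  have hc := h.cont
  rw [int_scale (f := fun y : E2 => ((y i - z i) * η y) ^ 2) _ hz hu]
  · gcongr
    rw [← integral_const_mul]
    refine integral_mono_ae (tri_integrable (by fun_prop)) (tri_integrable (by fun_prop)) ?_
    filter_upwards [ae_restrict_mem tri_measurable] with x hx
    have := tri_coord (subset_closure hx) hz i
    have h4 : (x i - z i) ^ 2 ≤ 4 := by
      rw [← sq_abs]; nlinarith [abs_nonneg (x i - z i)]
    simp only [mul_pow]
    gcongr
  · intro x hx
    exact h.mem (right_ne_zero_of_mul (pow_ne_zero_iff (n := 2) (by norm_num) |>.1 hx))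

lemma Mol.abs_D {η : E2 → ℝ} (h : Mol η) {z : E2} (hz : z ∈ closure refTri)
    (i : Fin 2) : |∫ y, (y i - z i) * η y ∂mT| ≤ 2 := by
  have hc := h.cont
  have : ‖∫ y, (y i - z i) * η y ∂mT‖ ≤ ∫ y, 2 * η y ∂mT := by
    refine norm_integral_le_of_norm_le (tri_integrable (by fun_prop)) ?_
    filter_upwards [ae_restrict_mem tri_measurable] with x hx
    rw [norm_mul, Real.norm_of_nonneg (h.nonneg x)]
    exact mul_le_mul_of_nonneg_right (tri_coord (subset_closure hx) hz i) (h.nonneg x)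
  rw [integral_const_mul, int_tri (fun x hx => h.mem hx), h.int_one, mul_one] at this
  exact this

/-- The crucial decay estimate. -/
lemma Mol.decay {η : E2 → ℝ} (h : Mol η) {z : E2} (hz : z ∈ closure refTri)
    {t : ℝ} (ht : 0 < t) {g : E2 → ℝ} (hg : MemLp g 2 mT)
    (hG : GagFin t refTri g) {u : ℝ} (hu : 1 ≤ u) (i : Fin 2) :
    |(∫ x, theta η z u i x * g x ∂mT) -
      (u ^ 2)⁻¹ * ((∫ y, (y i - z i) * η y ∂mT) * ∫ x, η x * g x ∂mT)| ≤
    (4 ^ (1 + t) * 2 * ∫ x, η x ^ 2 ∂mT) * √(gagSq t refTri g) *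
      (u ^ (-(1 + t / 2)) + u ^ (-(3 / 2) : ℝ)) := by
  set N := ∫ x, η x ^ 2 ∂mT with hN
  have hN0 : 0 ≤ N := integral_nonneg fun x => sq_nonneg _
  set S := √(gagSq t refTri g) with hS
  have hS2 : S ^ 2 = gagSq t refTri g := Real.sq_sqrt (gagSq_nonneg _ _)
  have hS0 : 0 ≤ S := Real.sqrt_nonneg _
  have hu0 : 0 < u := by linarith
  set v := √u with hv
  have hv1 : 1 ≤ v := Real.one_le_sqrt.2 hu
  have hv0 : 0 < v := by linarith
  have hv2 : v ^ 2 = u := Real.sq_sqrt (by linarith)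
  have hvu : v ≤ u := by nlinarith
  have vp : ∀ a : ℝ, v ^ a = u ^ (a / 2) := by
    intro a; rw [hv, Real.sqrt_eq_rpow, ← Real.rpow_mul hu0.le]; congr 1; ring
  have k1 := kernel_cmp (r := 4 / v) ht hg hG (h.theta_cont u i (z := z)) (h.eta_cont v (z := z))
    (h.int_eta hz hv1) (by
      intro x _ y _ hx hy
      have a := h.near hz hu (right_ne_zero_of_mul (right_ne_zero_of_mul hx))
      have b := h.near hz hv1 (right_ne_zero_of_mul hy)
      have c : 2 / u ≤ 2 / v := by gcongr
      have d := dist_triangle_right x y z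
      have e : 4 / v = 2 / v + 2 / v := by ring
      linarith)
  have k2 := kernel_cmp (r := 2) ht hg hG (h.eta_cont v (z := z)) h.cont
    (by rw [int_tri (fun x hx => h.mem hx), h.int_one]) (by
      intro x hx y hy _ _
      rw [dist_eq_norm]; exact tri_norm (subset_closure hx) (subset_closure hy))
  rw [h.int_theta hz hu, h.int_eta_sq hz hv1, hv2, ← hS2] at k1
  rw [h.int_eta hz hv1, h.int_eta_sq hz hv1, hv2, ← hS2, one_mul] at k2
  have hth := h.int_theta_sq hz hu i
  have hD := h.abs_D hz i
  rw [← hN] at k1 k2 hth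
  set D := ∫ y, (y i - z i) * η y ∂mT
  set c := ∫ x, η x * g x ∂mT
  set M := ∫ x, eta η z v x * g x ∂mT
  set I := ∫ x, theta η z u i x * g x ∂mT
  have k1' : |I - (u ^ 2)⁻¹ * D * M| ≤ (4 ^ (1 + t) * 2 * N) * S * u ^ (-(1 + t / 2)) := by
    have e1 : (4 ^ (1 + t) * 2 * N) * S * u ^ (-(1 + t / 2)) =
        (4 / v) ^ (1 + t) * (2 * N * S * v⁻¹) := by
      rw [Real.div_rpow (by norm_num) hv0.le, vp, div_eq_mul_inv (4 ^ (1 + t)), ← Real.rpow_neg hu0.le,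
        ← Real.rpow_neg_one v, vp]
      have : u ^ (-(1 + t / 2)) = u ^ (-((1 + t) / 2)) * u ^ (-1 / 2 : ℝ) := by
        rw [← Real.rpow_add hu0]; congr 1; ring
      rw [this]; ring
    rw [e1]
    refine abs_le_of_sq_le_sq (k1.trans ?_) (by positivity)
    calc _ ≤ ((4 / v) ^ (1 + t)) ^ 2 * ((u ^ 2)⁻¹ * (4 * N) * (u * N)) * S ^ 2 := by gcongr
      _ = _ := by rw [← hv2]; field_simp; ring
  have k2' : |M - c| ≤ 2 ^ (1 + t) * N * S * v := by
    refine abs_le_of_sq_le_sq (k2.trans ?_) (by positivity)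
    rw [← hv2]; apply le_of_eq; ring
  have p24 : (2:ℝ) ^ (1 + t) ≤ 4 ^ (1 + t) := by gcongr; norm_num
  have e2 : (u ^ 2)⁻¹ * v = u ^ (-(3 / 2) : ℝ) := by
    have : (u ^ 2)⁻¹ = u ^ (-2 : ℝ) := by
      rw [Real.rpow_neg hu0.le]; norm_cast
    rw [this, ← Real.rpow_one v, vp, ← Real.rpow_add hu0]; norm_num
  have k3 : |(u ^ 2)⁻¹ * D * (M - c)| ≤ (4 ^ (1 + t) * 2 * N) * S * u ^ (-(3 / 2) : ℝ) := by
    rw [abs_mul, abs_mul, abs_of_nonneg (by positivity : 0 ≤ (u ^ 2)⁻¹), ← e2]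
    calc _ ≤ (u ^ 2)⁻¹ * 2 * (4 ^ (1 + t) * N * S * v) := by
          gcongr
          exact k2'.trans (by gcongr)
      _ = _ := by ring
  have : I - (u ^ 2)⁻¹ * (D * c) = (I - (u ^ 2)⁻¹ * D * M) + (u ^ 2)⁻¹ * D * (M - c) := by ring
  rw [this, mul_add]
  exact (abs_add_le _ _).trans (add_le_add k1' k3)

lemma Mol.theta_smooth {η : E2 → ℝ} (h : Mol η) {z : E2}
    (u : ℝ) (i : Fin 2) : ContDiff ℝ (⊤ : ℕ∞) (theta η z u i) := by
  have := h.smooth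
  unfold theta
  refine ContDiff.mul ?_ (contDiff_const.mul (this.comp (by fun_prop)))
  fun_prop

lemma Mol.pd_theta {η : E2 → ℝ} (h : Mol η) {z : E2}
    (u : ℝ) (i : Fin 2) (x : E2) : pd i (theta η z u i) x =
    (x i - z i) * (u ^ 2 * fderiv ℝ η (z + u • (x - z)) (EuclideanSpace.single i 1))
      + u * η (z + u • (x - z)) := by
  have h1 : HasFDerivAt (fun x : E2 => x i - z i) (EuclideanSpace.proj i : E2 →L[ℝ] ℝ) x :=
    (EuclideanSpace.proj i : E2 →L[ℝ] ℝ).hasFDerivAt.sub_const _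
  have h2 : HasFDerivAt (fun x : E2 => z + u • (x - z)) (u • ContinuousLinearMap.id ℝ E2) x :=
    (((hasFDerivAt_id x).sub_const z).const_smul u).const_add z
  have hd : DifferentiableAt ℝ η (z + u • (x - z)) :=
    h.smooth.contDiffAt.differentiableAt (by simp)
  have h3 := (hd.hasFDerivAt.comp x h2).const_mul u
  have h4 := h1.mul h3
  have h5 : HasFDerivAt (theta η z u i) _ x := h4
  unfold pd
  rw [h5.fderiv]
  have hp : (EuclideanSpace.proj i : E2 →L[ℝ] ℝ) (EuclideanSpace.single i 1) = 1 := by simp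
  simp only [add_apply, smul_apply,
    ContinuousLinearMap.comp_apply, ContinuousLinearMap.id_apply, map_smul, smul_eq_mul,
    Function.comp_apply, hp]
  ring

lemma Mol.sum_pd {η : E2 → ℝ} (h : Mol η) {z : E2}
    (u : ℝ) (x : E2) : ∑ i, pd i (theta η z u i) x =
    2 * u * η (z + u • (x - z)) + u ^ 2 * fderiv ℝ η (z + u • (x - z)) (x - z) := by
  have e : x - z = (x 0 - z 0) • EuclideanSpace.single 0 (1:ℝ)
      + (x 1 - z 1) • EuclideanSpace.single 1 (1:ℝ) := by
    ext j; fin_cases j <;> simp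
  have : fderiv ℝ η (z + u • (x - z)) (x - z) =
      (x 0 - z 0) * fderiv ℝ η (z + u • (x - z)) (EuclideanSpace.single 0 1)
      + (x 1 - z 1) * fderiv ℝ η (z + u • (x - z)) (EuclideanSpace.single 1 1) := by
    generalize fderiv ℝ η (z + u • (x - z)) = L
    rw [e, map_add, map_smul, map_smul, smul_eq_mul, smul_eq_mul]
  rw [Fin.sum_univ_two, h.pd_theta, h.pd_theta, this]
  ring

lemma Mol.theta_test {η : E2 → ℝ} (h : Mol η) {z : E2} (hz : z ∈ closure refTri)
    {u : ℝ} (hu : 1 ≤ u) (i : Fin 2) : IsTestFun refTri (theta η z u i) := by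
  have hu0 : u ≠ 0 := by linarith
  have hsub : tsupport (theta η z u i) ⊆ {x | z + u • (x - z) ∈ tsupport η} := by
    refine closure_minimal ?_ ?_
    · intro x hx
      exact subset_tsupport _ (right_ne_zero_of_mul (right_ne_zero_of_mul hx))
    · exact (isClosed_tsupport η).preimage (by fun_prop)
  have hsubT : tsupport (theta η z u i) ⊆ refTri :=
    fun x hx => tri_segment hz hu (h.supp (hsub hx))
  refine ⟨h.theta_smooth u i, ?_, hsubT⟩
  exact tri_compact.of_isClosed_subset (isClosed_tsupport _) (hsubT.trans subset_closure)

lemma Mol.deriv_a {η : E2 → ℝ} (h : Mol η) {z : E2} (hz : z ∈ closure refTri)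
    {φ : E2 → ℝ} {g : Fin 2 → E2 → ℝ} (hφ : MemLp φ 2 mT)
    (hw : ∀ i, HasWeakPD refTri i φ (g i)) {u : ℝ} (hu : 1 ≤ u) :
    HasDerivAt (fun u => ∫ x, φ x * eta η z u x ∂mT)
      (-∑ i, ∫ x, theta η z u i x * g i x ∂mT) u := by
  have hc := h.cont
  have hfc : Continuous (fderiv ℝ η) := h.smooth.continuous_fderiv (by simp)
  have hφ1 : Integrable φ mT := hφ.integrable (by norm_num)
  have hF'c : Continuous fun q : ℝ × E2 => 2 * q.1 * η (z + q.1 • (q.2 - z))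
      + q.1 ^ 2 * fderiv ℝ η (z + q.1 • (q.2 - z)) (q.2 - z) := by
    have a : Continuous fun q : ℝ × E2 => fderiv ℝ η (z + q.1 • (q.2 - z)) (q.2 - z) :=
      (hfc.comp (by fun_prop)).clm_apply (by fun_prop)
    fun_prop
  obtain ⟨M, hM⟩ := ((isCompact_closedBall u 1).prod tri_compact).exists_bound_of_continuousOn
    hF'c.continuousOn
  have key := (hasDerivAt_integral_of_dominated_loc_of_deriv_le (μ := mT)
    (F := fun u x => φ x * eta η z u x) (x₀ := u) (s := Metric.closedBall u 1)
    (F' := fun u x => φ x * (2 * u * η (z + u • (x - z))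
      + u ^ 2 * fderiv ℝ η (z + u • (x - z)) (x - z)))
    (bound := fun x => M * ‖φ x‖)
    (Metric.closedBall_mem_nhds u one_pos)
    (Eventually.of_forall fun w => hφ1.aestronglyMeasurable.mul
      (h.eta_cont w).aestronglyMeasurable)
    (by simpa only [mul_comm] using tri_mul_integrable (h.eta_cont u (z := z)) hφ)
    (hφ1.aestronglyMeasurable.mul
      (hF'c.comp (by fun_prop : Continuous fun x : E2 => (u, x))).aestronglyMeasurable)
    ?_ (hφ1.norm.const_mul M) ?_).2
  · refine key.congr_deriv ?_
    have e : ∀ i, ∫ x, theta η z u i x * g i x ∂mT = - ∫ x, φ x * pd i (theta η z u i) x ∂mT := by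
      intro i
      rw [hw i _ (h.theta_test hz hu i), neg_neg]
      simp_rw [mul_comm]
    have ii : ∀ i, Integrable (fun x => φ x * pd i (theta η z u i) x) mT := by
      intro i
      have : Continuous (pd i (theta η z u i)) :=
        ((h.theta_smooth u i).continuous_fderiv (by simp)).clm_apply continuous_const
      simpa only [mul_comm] using tri_mul_integrable this hφ
    simp_rw [e, Finset.sum_neg_distrib, neg_neg]
    rw [← integral_finsetSum _ (fun i _ => ii i)]
    simp_rw [← Finset.mul_sum, h.sum_pd]
  · filter_upwards [ae_restrict_mem tri_measurable] with x hx w hw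
    rw [norm_mul, mul_comm]
    gcongr
    exact hM (w, x) ⟨hw, subset_closure hx⟩
  · refine Eventually.of_forall fun x w _ => ?_
    have hd : DifferentiableAt ℝ η (z + w • (x - z)) :=
      h.smooth.contDiffAt.differentiableAt (by simp)
    have h1 : HasDerivAt (fun w : ℝ => z + w • (x - z)) (x - z) w := by
      simpa using ((hasDerivAt_id w).smul_const (x - z)).const_add z
    have h2 := hd.hasFDerivAt.comp_hasDerivAt w h1
    have h3 := (((hasDerivAt_pow 2 w).mul h2).const_mul (φ x))
    refine h3.congr_deriv ?_
    simp

lemma Mol.lim_a {η : E2 → ℝ} (h : Mol η) {z : E2} (hz : z ∈ closure refTri)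
    {φ ψ : E2 → ℝ} (hφ : MemLp φ 2 mT) (hψ : ContinuousOn ψ (closure refTri))
    (hae : ∀ᵐ x ∂mT, ψ x = φ x) :
    Tendsto (fun u => ∫ x, φ x * eta η z u x ∂mT) atTop (𝓝 (ψ z)) := by
  rw [Metric.tendsto_atTop]
  intro ε hε
  obtain ⟨δ, hδ, hd⟩ := Metric.continuousWithinAt_iff.1 (hψ z hz) (ε / 2) (by linarith)
  refine ⟨max 1 (4 / δ), fun u hu => ?_⟩
  have hu1 : 1 ≤ u := (le_max_left _ _).trans hu
  have hu2 : 4 / δ ≤ u := (le_max_right _ _).trans hu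
  have hlt : 2 / u < δ := by
    rw [div_lt_iff₀ (by linarith)]
    rw [div_le_iff₀ hδ] at hu2
    nlinarith
  have e : (∫ x, φ x * eta η z u x ∂mT) - ψ z = ∫ x, (φ x - ψ z) * eta η z u x ∂mT := by
    simp_rw [sub_mul]
    rw [integral_sub (by simpa only [mul_comm] using tri_mul_integrable (h.eta_cont u (z := z)) hφ)
      ((tri_integrable (h.eta_cont u)).const_mul _), integral_const_mul, h.int_eta hz hu1, mul_one]
  rw [dist_eq_norm, e]
  have : ‖∫ x, (φ x - ψ z) * eta η z u x ∂mT‖ ≤ ∫ x, ε / 2 * eta η z u x ∂mT := by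
    refine norm_integral_le_of_norm_le ((tri_integrable (h.eta_cont u)).const_mul _) ?_
    filter_upwards [hae, ae_restrict_mem tri_measurable] with x hx hxT
    have hn : 0 ≤ eta η z u x := mul_nonneg (sq_nonneg _) (h.nonneg _)
    by_cases h0 : eta η z u x = 0
    · simp [h0]
    rw [norm_mul, Real.norm_of_nonneg hn]
    gcongr
    have := hd (subset_closure hxT) ((h.near hz hu1 (right_ne_zero_of_mul h0)).trans_lt hlt)
    rw [← hx, ← dist_eq_norm]
    exact this.le
  rw [integral_const_mul, h.int_eta hz hu1] at this
  linarith

/-- The Sobolev-type representation estimate at a point of the closed triangle. -/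
lemma Mol.point {η : E2 → ℝ} (h : Mol η) {z : E2} (hz : z ∈ closure refTri)
    {t : ℝ} (ht : 0 < t) {φ ψ : E2 → ℝ} {g : Fin 2 → E2 → ℝ} (hφ : MemLp φ 2 mT)
    (hw : ∀ i, HasWeakPD refTri i φ (g i)) (hg : ∀ i, MemLp (g i) 2 mT)
    (hG : ∀ i, GagFin t refTri (g i))
    (hψ : ContinuousOn ψ (closure refTri)) (hae : ∀ᵐ x ∂mT, ψ x = φ x) :
    |ψ z - ((∫ x, φ x * η x ∂mT) -
        ∑ i, (∫ y, (y i - z i) * η y ∂mT) * ∫ x, η x * g i x ∂mT)| ≤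
      (4 ^ (1 + t) * 2 * ∫ x, η x ^ 2 ∂mT) * (2 / t + 2) * ∑ i, √(gagSq t refTri (g i)) := by
  set C0 := 4 ^ (1 + t) * 2 * ∫ x, η x ^ 2 ∂mT with hC0
  have hC00 : 0 ≤ C0 := by
    have : 0 ≤ ∫ x, η x ^ 2 ∂mT := integral_nonneg fun x => sq_nonneg _
    positivity
  set S := ∑ i, √(gagSq t refTri (g i)) with hS
  have hS0 : 0 ≤ S := Finset.sum_nonneg fun i _ => Real.sqrt_nonneg _
  set cD := ∑ i, (∫ y, (y i - z i) * η y ∂mT) * ∫ x, η x * g i x ∂mT with hcD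
  set A := ∫ x, φ x * η x ∂mT with hA
  set a : ℝ → ℝ := fun u => ∫ x, φ x * eta η z u x ∂mT with ha
  have ha1 : a 1 = A := by simp [ha, hA, eta]
  set F : ℝ → ℝ := fun u => a u - cD * u⁻¹ - (A - cD) with hF
  have hFd : ∀ u, 1 ≤ u → HasDerivAt F
      (-∑ i, ((∫ x, theta η z u i x * g i x ∂mT) -
      (u ^ 2)⁻¹ * ((∫ y, (y i - z i) * η y ∂mT) * ∫ x, η x * g i x ∂mT))) u := by
    intro u hu
    have h1 := ((h.deriv_a hz hφ hw hu).sub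
      ((hasDerivAt_inv (by linarith : u ≠ 0)).const_mul cD)).sub_const (A - cD)
    refine h1.congr_deriv ?_
    rw [Finset.sum_sub_distrib, ← Finset.mul_sum, ← hcD]
    ring
  set B : ℝ → ℝ := fun u => C0 * S * ((2 / t + 2) - (2 / t) * u ^ (-(t / 2))
    - 2 * u ^ (-(1 / 2) : ℝ)) with hB
  have hBd : ∀ u, 1 ≤ u → HasDerivAt B
      (C0 * S * (u ^ (-(1 + t / 2)) + u ^ (-(3 / 2) : ℝ))) u := by
    intro u hu
    have r1 := (Real.hasDerivAt_rpow_const (x := u) (p := -(t/2)) (Or.inl (by linarith))).const_mul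
      (2 / t)
    have r2 := (Real.hasDerivAt_rpow_const (x := u) (p := (-(1/2) : ℝ))
      (Or.inl (by linarith))).const_mul 2
    have := (((hasDerivAt_const u (2 / t + 2)).sub r1).sub r2).const_mul (C0 * S)
    refine this.congr_deriv ?_
    have e1 : -(t / 2) - 1 = -(1 + t / 2) := by ring
    have e2 : (-(1 / 2) : ℝ) - 1 = -(3 / 2) := by norm_num
    rw [e1, e2]
    field_simp
    ring
  have hbound : ∀ u, 1 ≤ u → |F u| ≤ C0 * (2 / t + 2) * S := by
    intro u hu
    have := image_norm_le_of_norm_deriv_right_le_deriv_boundary' (f := F) (a := 1) (b := u)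
      (B := B)
      (fun x hx => (hFd x hx.1).continuousAt.continuousWithinAt)
      (fun x hx => (hFd x hx.1).hasDerivWithinAt)
      (by simp [hF, ha1, hB])
      (fun x hx => (hBd x hx.1).continuousAt.continuousWithinAt)
      (fun x hx => (hBd x hx.1).hasDerivWithinAt)
      (by
        intro x hx
        rw [norm_neg]
        refine (norm_sum_le _ _).trans ?_
        calc _ ≤ ∑ i, C0 * √(gagSq t refTri (g i)) * (x ^ (-(1 + t / 2)) + x ^ (-(3 / 2) : ℝ)) :=
              Finset.sum_le_sum fun i _ => h.decay hz ht (hg i) (hG i) hx.1 i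
          _ = _ := by rw [← Finset.sum_mul, ← Finset.mul_sum])
      (right_mem_Icc.2 hu)
    refine this.trans ?_
    have p1 : 0 ≤ (2 / t) * u ^ (-(t / 2)) := by positivity
    have p2 : 0 ≤ 2 * u ^ (-(1 / 2) : ℝ) := by positivity
    calc B u ≤ C0 * S * (2 / t + 2) := by
          simp only [hB]; gcongr; linarith
      _ = _ := by ring
  have hlim : Tendsto F atTop (𝓝 (ψ z - cD * 0 - (A - cD))) :=
    ((h.lim_a hz hφ hψ hae).sub (tendsto_inv_atTop_zero.const_mul cD)).sub_const _
  rw [mul_zero, sub_zero] at hlim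
  exact le_of_tendsto hlim.abs (eventually_atTop.2 ⟨1, hbound⟩)

/-- L² control of a function by its seminorm and a weighted mean. -/
lemma Mol.l2 {η : E2 → ℝ} (h : Mol η) {t : ℝ} (ht : 0 < t) {g : E2 → ℝ} (hg : MemLp g 2 mT)
    (hG : GagFin t refTri g) (hV : 0 < mT.real univ) :
    ∫ x, g x ^ 2 ∂mT ≤ ((2 ^ (1 + t)) ^ 2 / (2 * mT.real univ)
        + 2 * (2 ^ (1 + t)) ^ 2 * ∫ x, η x ^ 2 ∂mT) * gagSq t refTri g
      + 2 * mT.real univ * (∫ x, η x * g x ∂mT) ^ 2 := by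
  have k := kernel_cmp (K := fun _ => 1) (r := 2) ht hg hG continuous_const h.cont
    (by rw [int_tri (fun x hx => h.mem hx), h.int_one]) (by
      intro x hx y hy _ _
      rw [dist_eq_norm]; exact tri_norm (subset_closure hx) (subset_closure hy))
  simp only [one_mul, one_pow, integral_const, smul_eq_mul, mul_one] at k
  have hg2 : Integrable (fun x => g x ^ 2) mT := hg.integrable_sq
  have hg1 : Integrable g mT := hg.integrable (by norm_num)
  have one : Integrable (fun _ : E2 => (1:ℝ)) mT := integrable_const _
  have i1 := hg2.mul_prod one
  have i2 := hg1.mul_prod hg1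
  have i3 := one.mul_prod hg2
  have iA : Integrable (fun p : E2 × E2 => g p.1 ^ 2 * 1 - 2 * (g p.1 * g p.2)) (mT.prod mT) :=
    i1.sub (i2.const_mul 2)
  have e : ∀ p : E2 × E2, (g p.1 - g p.2) ^ 2 =
      g p.1 ^ 2 * 1 - 2 * (g p.1 * g p.2) + 1 * g p.2 ^ 2 := by intro p; ring
  have iP : Integrable (fun p : E2 × E2 => (g p.1 - g p.2) ^ 2) (mT.prod mT) := by
    simp_rw [e]; exact iA.add i3
  have eP : ∫ p, (g p.1 - g p.2) ^ 2 ∂(mT.prod mT) =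
      2 * mT.real univ * (∫ x, g x ^ 2 ∂mT) - 2 * (∫ x, g x ∂mT) ^ 2 := by
    simp_rw [e]
    rw [integral_add iA i3, integral_sub i1 (i2.const_mul 2), integral_const_mul,
      integral_prod_mul (fun x => g x ^ 2) (fun _ => (1:ℝ)), integral_prod_mul g g,
      integral_prod_mul (fun _ => (1:ℝ)) (fun x => g x ^ 2)]
    simp only [integral_const, smul_eq_mul, mul_one]
    ring
  have hP : ∫ p, (g p.1 - g p.2) ^ 2 ∂(mT.prod mT) ≤ (2 ^ (1 + t)) ^ 2 * gagSq t refTri g := by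
    rw [gagSq_eq hG, ← integral_const_mul]
    refine integral_mono_ae iP (Integrable.const_mul hG _) ?_
    have hm : ∀ᵐ p ∂(mT.prod mT), p ∈ refTri ×ˢ refTri := by
      rw [Measure.prod_restrict]
      exact ae_restrict_mem (tri_measurable.prod tri_measurable)
    filter_upwards [hm] with p hp
    by_cases hpp : p.1 = p.2
    · simp [hpp]
    have hd : 0 < dist p.1 p.2 := dist_pos.2 hpp
    have hd2 : dist p.1 p.2 ≤ 2 := by
      rw [dist_eq_norm]; exact tri_norm (subset_closure hp.1) (subset_closure hp.2)
    have e2 : ((2:ℝ) ^ (1 + t)) ^ 2 = 2 ^ (2 + 2 * t) := by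
      rw [← Real.rpow_mul_natCast (by norm_num)]; congr 1; push_cast; ring
    rw [e2, mul_div_assoc', le_div_iff₀ (Real.rpow_pos_of_pos hd _), mul_comm]
    gcongr
  rw [eP] at hP
  set V := mT.real univ
  set J := ∫ x, g x ∂mT
  set c := ∫ x, η x * g x ∂mT
  set N := ∫ x, η x ^ 2 ∂mT
  set G := gagSq t refTri g
  set R2 := ((2:ℝ) ^ (1 + t)) ^ 2
  set Q := ∫ x, g x ^ 2 ∂mT
  have hJ : J ^ 2 ≤ 2 * (R2 * (V * N) * G) + 2 * (V * c) ^ 2 := by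
    nlinarith [sq_nonneg (J - 2 * (V * c))]
  have h2 : 2 * V * Q ≤ 2 * V * ((R2 / (2 * V) + 2 * R2 * N) * G + 2 * V * c ^ 2) := by
    have : 2 * V * ((R2 / (2 * V) + 2 * R2 * N) * G + 2 * V * c ^ 2) =
      R2 * G + 4 * R2 * N * V * G + 4 * V ^ 2 * c ^ 2 := by field_simp; ring
    rw [this]; nlinarith
  exact le_of_mul_le_mul_left h2 (by positivity)

set_option maxHeartbeats 1000000 in
/-- **A fractional Bramble–Hilbert inequality** (Lemma 2.5): for `1 < s = 1 + t < 2`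
there is `C_BH` such that every `φ ∈ H^s(T̂)` vanishing at the vertices of the reference
triangle satisfies `‖φ‖_{s,T̂} ≤ C_BH |φ|_{s,T̂}`.  Here `g i` are the weak partial
derivatives of `φ` and `ψ` is a continuous representative of `φ`. -/
theorem fractional_bramble_hilbert (s : ℝ) (hs1 : 1 < s) (hs2 : s < 2) :
    ∃ C : ℝ, 0 < C ∧ ∀ (φ : E2 → ℝ) (g : Fin 2 → E2 → ℝ) (ψ : E2 → ℝ),
      MemLp φ 2 (volume.restrict refTri) →
      (∀ i, HasWeakPD refTri i φ (g i)) →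
      (∀ i, MemLp (g i) 2 (volume.restrict refTri)) →
      (∀ i, GagFin (s - 1) refTri (g i)) →
      ContinuousOn ψ (closure refTri) →
      (∀ᵐ x ∂(volume.restrict refTri), ψ x = φ x) →
      ψ 0 = 0 → ψ (EuclideanSpace.single 0 1) = 0 → ψ (EuclideanSpace.single 1 1) = 0 →
      (∫ x in refTri, (φ x) ^ 2) + (∑ i : Fin 2, ∫ x in refTri, (g i x) ^ 2) +
          (∑ i : Fin 2, gagSq (s - 1) refTri (g i)) ≤
        C ^ 2 * ∑ i : Fin 2, gagSq (s - 1) refTri (g i) := by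
  obtain ⟨η, h⟩ := exists_mol
  have ht : 0 < s - 1 := by linarith
  set t := s - 1 with htdef
  have hη1 : ∫ x, η x ∂mT = 1 := by rw [int_tri (fun x hx => h.mem hx), h.int_one]
  have hV : 0 < mT.real univ := by
    rw [measureReal_def, ENNReal.toReal_pos_iff]
    refine ⟨?_, measure_lt_top _ _⟩
    rw [pos_iff_ne_zero, Ne, Measure.measure_univ_eq_zero]
    intro h0
    rw [h0, integral_zero_measure] at hη1
    exact zero_ne_one hη1
  set V := mT.real univ with hVdef
  set N := ∫ x, η x ^ 2 ∂mT with hN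
  have hN0 : 0 ≤ N := integral_nonneg fun x => sq_nonneg _
  set R2 := ((2:ℝ) ^ (1 + t)) ^ 2 with hR2
  have hR20 : 0 ≤ R2 := sq_nonneg _
  set C1 := (4 ^ (1 + t) * 2 * N) * (2 / t + 2) with hC1
  have hC10 : 0 ≤ C1 := by positivity
  set Q := 32 * V * C1 ^ 2 + (R2 / (2 * V) + 2 * R2 * N + 32 * V * C1 ^ 2) + 1 with hQ
  have hQ0 : 0 < Q := by positivity
  refine ⟨√Q, Real.sqrt_pos.2 hQ0, ?_⟩
  intro φ g ψ hφ hw hg hG hψ hae v0 v1 v2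
  rw [Real.sq_sqrt hQ0.le]
  have pt := fun (z : E2) (hz : z ∈ closure refTri) => h.point hz ht hφ hw hg hG hψ hae
  set c : Fin 2 → ℝ := fun i => ∫ x, η x * g i x ∂mT with hc
  set A := ∫ x, φ x * η x ∂mT with hA
  set b : Fin 2 → ℝ := fun i => ∫ y, y i * η y ∂mT with hb
  have hηc := h.cont
  have hD : ∀ (z : E2) (i : Fin 2), ∫ y, (y i - z i) * η y ∂mT = b i - z i := by
    intro z i
    simp_rw [sub_mul]
    rw [integral_sub (tri_integrable (by fun_prop)) (tri_integrable (by fun_prop)),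
      integral_const_mul, hη1, mul_one]
  set S := ∑ i, √(gagSq t refTri (g i)) with hS
  have hS0 : 0 ≤ S := Finset.sum_nonneg fun i _ => Real.sqrt_nonneg _
  set q := A - ∑ i, b i * c i with hq
  have pt' : ∀ z ∈ closure refTri, |ψ z - (q + (z 0 * c 0 + z 1 * c 1))| ≤ C1 * S := by
    intro z hz
    have := pt z hz
    simp_rw [hD] at this
    have e : q + (z 0 * c 0 + z 1 * c 1) = A - ∑ i, (b i - z i) * c i := by
      simp only [hq, Fin.sum_univ_two]; ring
    rw [e]; exact this
  have a0 := pt' 0 vert0.1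
  have a1 := pt' _ (vert0.2 0)
  have a2 := pt' _ (vert0.2 1)
  rw [v0] at a0
  rw [v1] at a1
  rw [v2] at a2
  simp at a0 a1 a2
  rw [abs_le] at a0 a1 a2
  have c0 : |c 0| ≤ 2 * (C1 * S) := by rw [abs_le]; constructor <;> linarith
  have c1 : |c 1| ≤ 2 * (C1 * S) := by rw [abs_le]; constructor <;> linarith
  have hψb : ∀ z ∈ closure refTri, |ψ z| ≤ 4 * (C1 * S) := by
    intro z hz
    have := pt' z hz
    obtain ⟨z0, z1, z2⟩ := tri_closure hz
    rw [abs_le] at this c0 c1 ⊢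
    constructor <;> nlinarith
  set G := ∑ i, gagSq t refTri (g i) with hGdef
  have hG0 : ∀ i, 0 ≤ gagSq t refTri (g i) := fun i => gagSq_nonneg _ _
  have hSG : S ^ 2 ≤ 2 * G := by
    simp only [hS, hGdef, Fin.sum_univ_two]
    have s0 := Real.sq_sqrt (hG0 0)
    have s1 := Real.sq_sqrt (hG0 1)
    nlinarith [sq_nonneg (√(gagSq t refTri (g 0)) - √(gagSq t refTri (g 1)))]
  have hCS : (C1 * S) ^ 2 ≤ 2 * C1 ^ 2 * G := by
    rw [mul_pow]; nlinarith [sq_nonneg C1]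
  have hcsq : ∀ i, c i ^ 2 ≤ 4 * (C1 * S) ^ 2 := by
    have : ∀ i, |c i| ≤ 2 * (C1 * S) := by intro i; fin_cases i; exacts [c0, c1]
    intro i
    rw [← sq_abs]
    have := pow_le_pow_left₀ (abs_nonneg _) (this i) 2
    linarith
  have hφ2 : ∫ x in refTri, φ x ^ 2 ≤ V * (32 * C1 ^ 2 * G) := by
    have : ∫ x, φ x ^ 2 ∂mT ≤ ∫ _, 32 * C1 ^ 2 * G ∂mT := by
      refine integral_mono_ae hφ.integrable_sq (integrable_const _) ?_
      filter_upwards [hae, ae_restrict_mem tri_measurable] with x hx hxT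
      have hb := hψb x (subset_closure hxT)
      have := pow_le_pow_left₀ (abs_nonneg _) hb 2
      rw [sq_abs, hx] at this
      linarith
    rwa [integral_const, smul_eq_mul] at this
  have hg2 : ∑ i : Fin 2, ∫ x in refTri, g i x ^ 2 ≤
      (R2 / (2 * V) + 2 * R2 * N + 32 * V * C1 ^ 2) * G := by
    have l := fun i => h.l2 ht (hg i) (hG i) hV
    have hc2 : ∀ i, 2 * V * c i ^ 2 ≤ 16 * V * C1 ^ 2 * G := by
      intro i
      have : c i ^ 2 ≤ 8 * C1 ^ 2 * G := by linarith [hcsq i]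
      nlinarith
    calc _ ≤ ∑ i, ((R2 / (2 * V) + 2 * R2 * N) * gagSq t refTri (g i) + 16 * V * C1 ^ 2 * G) :=
          Finset.sum_le_sum fun i _ => (l i).trans (by linarith [hc2 i])
      _ = _ := by
          rw [Finset.sum_add_distrib, ← Finset.mul_sum, ← hGdef, Fin.sum_univ_two]
          ring
  rw [hQ]
  linarith

end
end

section
/- Let d ≥ 1, 0 ≤ θ < 1/2, and let G ⊂ ℝ^d be a bounded domain with Lipschitz boundary. Then there exists a constant C, depending only on d, θ and G, such that for every i ∈ {1,…,d} and all functions f, g that are restrictions to G of smooth functions on ℝ^d: |∫_G (∂f/∂x_i) · g dx| ≤ C · ‖f‖_{1−θ,G} · ‖g‖_{θ,G}. -/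
open MeasureTheory Metric Set Filter
open scoped Topology NNReal ENNReal

noncomputable section

abbrev Ed (d : ℕ) := EuclideanSpace ℝ (Fin d)

/-- Squared Gagliardo seminorm of order `s` on `G ⊆ ℝ^d`. -/
def gagSqD (d : ℕ) (s : ℝ) (G : Set (Ed d)) (v : Ed d → ℝ) : ℝ :=
  ∫ x in G, ∫ y in G, (v x - v y) ^ 2 / dist x y ^ ((d : ℝ) + 2 * s)

/-- Partial derivative in the `i`-th coordinate direction. -/
def pdD {d : ℕ} (i : Fin d) (f : Ed d → ℝ) (x : Ed d) : ℝ :=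
  fderiv ℝ f x (EuclideanSpace.single i 1)

/-- Lipschitz boundary: near every boundary point the set is the region above the graph
of a Lipschitz function in some direction `ν`. -/
def HasLipschitzBoundaryD {d : ℕ} (G : Set (Ed d)) : Prop :=
  ∀ x ∈ frontier G, ∃ (ν : Ed d) (L : NNReal) (γ : Ed d → ℝ) (U : Set (Ed d)),
    ‖ν‖ = 1 ∧ LipschitzWith L γ ∧ IsOpen U ∧ x ∈ U ∧
    G ∩ U = {y ∈ U | γ (y - (inner ℝ y ν : ℝ) • ν) < (inner ℝ y ν : ℝ)}

lemma lip_on_bdd {d : ℕ} {G : Set (Ed d)} (hG : Bornology.IsBounded G) {v : Ed d → ℝ}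
    (hv : ContDiff ℝ (⊤ : ℕ∞) v) :
    ∃ L : ℝ, 0 ≤ L ∧ ∀ x ∈ G, ∀ y ∈ G, |v x - v y| ≤ L * dist x y := by
  obtain ⟨R, hR⟩ := hG.subset_closedBall (0 : Ed d)
  have hc : ContinuousOn (fun x => ‖fderiv ℝ v x‖) (closedBall (0 : Ed d) R) :=
    ((hv.continuous_fderiv (by simp)).norm).continuousOn
  obtain ⟨C, hC⟩ := (isCompact_closedBall (0 : Ed d) R).bddAbove_image hc
  have hC' : ∀ x ∈ closedBall (0 : Ed d) R, ‖fderiv ℝ v x‖ ≤ max C 0 := fun x hx =>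
    le_max_of_le_left (hC ⟨x, hx, rfl⟩)
  refine ⟨max C 0, le_max_right _ _, fun x hx y hy => ?_⟩
  have := (convex_closedBall (0 : Ed d) R).norm_image_sub_le_of_norm_fderiv_le (𝕜 := ℝ)
    (fun z _ => (hv.differentiable (by simp)).differentiableAt) hC' (hR hy) (hR hx)
  rwa [Real.norm_eq_abs, ← dist_eq_norm] at this

lemma lint_norm_rpow_lt_top {d : ℕ} (hd : 1 ≤ d) {r : ℝ} (hr : -(d : ℝ) < r) (R : ℝ) :
    ∫⁻ v in ball (0 : Ed d) R, ENNReal.ofReal (‖v‖ ^ r) < ⊤ := by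
  have h : IntegrableOn (fun x : Ed d => (fun t : ℝ => t ^ r) ‖x‖) (ball (0 : Ed d) R) := by
    have : Nontrivial (Ed d) := by
      have : Nonempty (Fin d) := ⟨⟨0, hd⟩⟩
      infer_instance
    refine (integrableOn_fun_norm_addHaar (volume : Measure (Ed d)) (f := fun t : ℝ => t ^ r)).2 ?_
    have h1 : IntegrableOn (fun y : ℝ => y ^ ((d : ℝ) - 1 + r)) (Ioo 0 R) := by
      rcases le_or_gt R 0 with hR | hR
      · simp [Ioo_eq_empty_of_le hR]
      · exact (intervalIntegral.integrableOn_Ioo_rpow_iff hR).2 (by linarith)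
    refine h1.congr_fun (fun y hy => ?_) measurableSet_Ioo
    simp only [smul_eq_mul, finrank_euclideanSpace, Fintype.card_fin]
    rw [Real.rpow_add hy.1, ← Real.rpow_natCast, Nat.cast_sub hd]
    simp
  exact h.lintegral_lt_top

lemma gag_inner_bound {d : ℕ} (hd : 1 ≤ d) {s : ℝ} (hs : s < 1)
    {G : Set (Ed d)} (hGopen : IsOpen G)
    (hG : Bornology.IsBounded G) {v : Ed d → ℝ} (hv : ContDiff ℝ (⊤ : ℕ∞) v) :
    ∃ K : ℝ≥0∞, K < ⊤ ∧ ∀ x ∈ G,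
      ∫⁻ y in G, ENNReal.ofReal ((v x - v y) ^ 2 / dist x y ^ ((d : ℝ) + 2 * s)) ≤ K := by
  obtain ⟨L, hL0, hL⟩ := lip_on_bdd hG hv
  obtain ⟨R, hR⟩ := hG.subset_ball (0 : Ed d)
  have hr : -(d : ℝ) < 2 - (d + 2 * s) := by linarith
  refine ⟨∫⁻ u in ball (0 : Ed d) (2 * R), ENNReal.ofReal (L ^ 2) *
    ENNReal.ofReal (‖u‖ ^ (2 - (d + 2 * s))), ?_, fun x hx => ?_⟩
  · rw [lintegral_const_mul' _ _ ENNReal.ofReal_ne_top]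
    exact ENNReal.mul_lt_top ENNReal.ofReal_lt_top (lint_norm_rpow_lt_top hd hr _)
  · have e : ∫⁻ y, (G.indicator (fun y => ENNReal.ofReal ((v x - v y) ^ 2 / dist x y ^ ((d : ℝ) + 2 * s)))) y
        = ∫⁻ u, (G.indicator (fun y => ENNReal.ofReal ((v x - v y) ^ 2 / dist x y ^ ((d : ℝ) + 2 * s)))) (x + u) :=
      (lintegral_add_left_eq_self _ x).symm
    rw [← lintegral_indicator hGopen.measurableSet, e, ← lintegral_indicator measurableSet_ball]
    refine lintegral_mono fun u => ?_
    by_cases hu : x + u ∈ G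
    · have hub : u ∈ ball (0 : Ed d) (2 * R) := by
        have h1 := hR hx
        have h2 := hR hu
        rw [mem_ball_zero_iff] at *
        calc ‖u‖ = ‖(x + u) - x‖ := by simp
          _ ≤ ‖x + u‖ + ‖x‖ := norm_sub_le _ _
          _ < 2 * R := by linarith
      rw [indicator_of_mem hu, indicator_of_mem hub, ← ENNReal.ofReal_mul (sq_nonneg _)]
      apply ENNReal.ofReal_le_ofReal
      have hd' : dist x (x + u) = ‖u‖ := by simp [dist_eq_norm]
      have := hL x hx _ hu
      rw [hd'] at *
      rcases (norm_nonneg u).eq_or_lt with h0 | h0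
      · have : v x - v (x + u) = 0 := by
          rw [← h0] at this; simpa using this
        rw [this]; simp; positivity
      · rw [div_le_iff₀ (by positivity), mul_assoc, ← Real.rpow_add h0]
        simp only [sub_add_cancel]
        rw [Real.rpow_ofNat, ← mul_pow, ← sq_abs]
        gcongr
    · rw [indicator_of_notMem hu]; exact zero_le

lemma gag_meas {d : ℕ} {s : ℝ} {v : Ed d → ℝ} (hv : Continuous v) :
    Measurable (fun p : Ed d × Ed d => (v p.1 - v p.2) ^ 2 / dist p.1 p.2 ^ ((d : ℝ) + 2 * s)) := by
  have := hv.measurable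
  fun_prop

lemma gag_lintegral {d : ℕ} (hd : 1 ≤ d) {s : ℝ} (hs : s < 1)
    {G : Set (Ed d)} (hGopen : IsOpen G)
    (hG : Bornology.IsBounded G) {v : Ed d → ℝ} (hv : ContDiff ℝ (⊤ : ℕ∞) v) :
    ∫⁻ x in G, ∫⁻ y in G, ENNReal.ofReal ((v x - v y) ^ 2 / dist x y ^ ((d : ℝ) + 2 * s))
      = ENNReal.ofReal (gagSqD d s G v) := by
  obtain ⟨K, hK, hKb⟩ := gag_inner_bound hd hs hGopen hG hv
  have hm := gag_meas (s := s) hv.continuous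
  have hin : ∀ x, ∫ y in G, (v x - v y) ^ 2 / dist x y ^ ((d : ℝ) + 2 * s)
      = (∫⁻ y in G, ENNReal.ofReal ((v x - v y) ^ 2 / dist x y ^ ((d : ℝ) + 2 * s))).toReal := by
    intro x
    rw [integral_eq_lintegral_of_nonneg_ae]
    · exact Eventually.of_forall fun y => by positivity
    · exact (hm.comp (measurable_const.prodMk measurable_id)).aestronglyMeasurable
  have hmi : Measurable (fun x => ∫⁻ y in G,
      ENNReal.ofReal ((v x - v y) ^ 2 / dist x y ^ ((d : ℝ) + 2 * s))) :=
    Measurable.lintegral_prod_right' (f := fun p : Ed d × Ed d =>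
      ENNReal.ofReal ((v p.1 - v p.2) ^ 2 / dist p.1 p.2 ^ ((d : ℝ) + 2 * s))) hm.ennreal_ofReal
  unfold gagSqD
  simp_rw [hin]
  rw [integral_toReal hmi.aemeasurable, ENNReal.ofReal_toReal]
  · refine ((setLIntegral_mono measurable_const hKb).trans_lt ?_).ne
    rw [lintegral_const]
    exact ENNReal.mul_lt_top hK (by simpa using hG.measure_lt_top)
  · exact (ae_restrict_iff' hGopen.measurableSet).2
      (Eventually.of_forall fun x hx => (hKb x hx).trans_lt hK)

/-- Squared `L²` modulus of translation by `a`, inside `G`. -/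
def oscD {d : ℕ} (G : Set (Ed d)) (v : Ed d → ℝ) (a : Ed d) : ℝ :=
  ∫ y in {y | y ∈ G ∧ y + a ∈ G}, (v (y + a) - v y) ^ 2

lemma oscD_nonneg {d : ℕ} (G : Set (Ed d)) (v : Ed d → ℝ) (a : Ed d) : 0 ≤ oscD G v a :=
  integral_nonneg fun _ => sq_nonneg _

lemma osc_set_meas {d : ℕ} {G : Set (Ed d)} (hG : IsOpen G) (a : Ed d) :
    MeasurableSet {y | y ∈ G ∧ y + a ∈ G} :=
  (hG.inter (hG.preimage (continuous_id.add continuous_const))).measurableSet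

lemma cont_integrableOn {d : ℕ} {G : Set (Ed d)} (hG : Bornology.IsBounded G) {v : Ed d → ℝ}
    (hv : Continuous v) : IntegrableOn v G :=
  (hv.continuousOn.integrableOn_compact hG.isCompact_closure).mono_set subset_closure

lemma oscD_ofReal {d : ℕ} {G : Set (Ed d)} (hGo : IsOpen G) (hG : Bornology.IsBounded G)
    {v : Ed d → ℝ} (hv : Continuous v) (a : Ed d) :
    ENNReal.ofReal (oscD G v a) =
      ∫⁻ y in G, G.indicator (fun x => ENNReal.ofReal ((v x - v y) ^ 2)) (y + a) := by
  unfold oscD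
  rw [ofReal_integral_eq_lintegral_ofReal]
  · rw [← lintegral_indicator (osc_set_meas hGo a), ← lintegral_indicator hGo.measurableSet]
    congr 1
    ext y
    by_cases h1 : y ∈ G <;> by_cases h2 : y + a ∈ G <;> simp [indicator, h1, h2]
  · exact cont_integrableOn (hG.subset fun y hy => hy.1) (by fun_prop)
  · exact Eventually.of_forall fun y => sq_nonneg _

lemma lint_scale {d : ℕ} {t : ℝ} (ht : 0 < t) (y : Ed d) {F : Ed d → ℝ≥0∞} (hF : Measurable F) :
    ∫⁻ w, F (y + t • w) = ENNReal.ofReal (t ^ (-(d : ℝ))) * ∫⁻ x, F x := by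
  have h1 : ∫⁻ w, F (y + t • w) = ∫⁻ u, F (y + u) ∂(Measure.map (t • ·) (volume : Measure (Ed d))) := by
    rw [lintegral_map (by fun_prop) (by fun_prop)]
  rw [h1, Measure.map_addHaar_smul _ ht.ne', lintegral_smul_measure, lintegral_add_left_eq_self]
  simp only [finrank_euclideanSpace, Fintype.card_fin, smul_eq_mul]
  congr 2
  rw [abs_of_pos (by positivity), Real.rpow_neg ht.le, Real.rpow_natCast]

lemma osc_sum_le {d : ℕ} (hd : 1 ≤ d) {s : ℝ} (hs0 : 0 < s) (hs : s < 1)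
    {G : Set (Ed d)} (hGo : IsOpen G) (hG : Bornology.IsBounded G)
    {v : Ed d → ℝ} (hv : ContDiff ℝ (⊤ : ℕ∞) v) (w0 : Ed d) {r : ℝ} (hr : 0 < r)
    (hrw : 3 * r ≤ ‖w0‖) (n : ℕ) :
    ∫⁻ w in ball w0 r, ∑ k ∈ Finset.range n,
        ENNReal.ofReal (((1 / 2 : ℝ) ^ k) ^ (-(2 * s)) * oscD G v ((1 / 2 : ℝ) ^ k • w))
      ≤ ENNReal.ofReal ((‖w0‖ + r) ^ ((d : ℝ) + 2 * s) * gagSqD d s G v) := by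
  set B := ball w0 r with hB
  have hvm := hv.continuous.measurable
  have hb : 0 < ‖w0‖ + r := by positivity
  set S : Ed d → ℕ → Set (Ed d) := fun y k => {x | ((1 / 2 : ℝ) ^ k)⁻¹ • (x - y) ∈ B} with hS
  have hSm : ∀ y k, MeasurableSet (S y k) := fun y k =>
    (isOpen_ball.preimage (by fun_prop : Continuous fun x : Ed d =>
      ((1 / 2 : ℝ) ^ k)⁻¹ • (x - y))).measurableSet
  have hnorm : ∀ y k x, x ∈ S y k → ‖w0‖ - r < ‖x - y‖ * 2 ^ k ∧ ‖x - y‖ * 2 ^ k < ‖w0‖ + r := by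
    intro y k x hx
    have h1 : ‖((1 / 2 : ℝ) ^ k)⁻¹ • (x - y) - w0‖ < r := by simpa [hS, hB, dist_eq_norm] using hx
    have h2 : ‖((1 / 2 : ℝ) ^ k)⁻¹ • (x - y)‖ = ‖x - y‖ * 2 ^ k := by
      rw [norm_smul]; simp [mul_comm]
    have h3 := abs_norm_sub_norm_le (((1 / 2 : ℝ) ^ k)⁻¹ • (x - y)) w0
    rw [h2] at h3
    have h4 := abs_lt.1 (h3.trans_lt h1)
    constructor <;> linarith [h4.1, h4.2]
  have hdisj : ∀ y, (↑(Finset.range n) : Set ℕ).PairwiseDisjoint (S y) := by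
    have key : ∀ y x j k, j < k → x ∈ S y j → x ∈ S y k → False := by
      intro y x j k hjk hj hk
      have h1 := (hnorm y j x hj).1
      have h2 := (hnorm y k x hk).2
      have h3 : (2 : ℝ) ^ (j + 1) ≤ 2 ^ k := pow_le_pow_right₀ (by norm_num) hjk
      have h4 : ‖x - y‖ * (2 ^ j * 2) ≤ ‖x - y‖ * 2 ^ k := by
        rw [← pow_succ]; gcongr
      linarith
    intro y j _ k _ hjk
    rw [Function.onFun, Set.disjoint_left]
    intro x hj hk
    rcases lt_or_gt_of_ne hjk with h | h
    · exact key y x j k h hj hk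
    · exact key y x k j h hk hj
  -- rewriting of each summand
  have hterm : ∀ k : ℕ, ∀ w, ENNReal.ofReal (((1 / 2 : ℝ) ^ k) ^ (-(2 * s)) * oscD G v ((1 / 2 : ℝ) ^ k • w))
      = ∫⁻ y in G, ENNReal.ofReal (((1 / 2 : ℝ) ^ k) ^ (-(2 * s))) *
        G.indicator (fun x => ENNReal.ofReal ((v x - v y) ^ 2)) (y + (1 / 2 : ℝ) ^ k • w) := by
    intro k w
    rw [ENNReal.ofReal_mul (by positivity), oscD_ofReal hGo hG hv.continuous,
      lintegral_const_mul' _ _ ENNReal.ofReal_ne_top]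
  have hmeas2 : ∀ k : ℕ, Measurable (fun p : Ed d × Ed d =>
      ENNReal.ofReal (((1 / 2 : ℝ) ^ k) ^ (-(2 * s))) *
        G.indicator (fun x => ENNReal.ofReal ((v x - v p.2) ^ 2)) (p.2 + (1 / 2 : ℝ) ^ k • p.1)) := by
    intro k
    have : (fun p : Ed d × Ed d =>
      ENNReal.ofReal (((1 / 2 : ℝ) ^ k) ^ (-(2 * s))) *
        G.indicator (fun x => ENNReal.ofReal ((v x - v p.2) ^ 2)) (p.2 + (1 / 2 : ℝ) ^ k • p.1))
      = fun p : Ed d × Ed d => ENNReal.ofReal (((1 / 2 : ℝ) ^ k) ^ (-(2 * s))) *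
        ({p : Ed d × Ed d | p.2 + (1 / 2 : ℝ) ^ k • p.1 ∈ G}.indicator
          (fun p => ENNReal.ofReal ((v (p.2 + (1 / 2 : ℝ) ^ k • p.1) - v p.2) ^ 2)) p) := by
      ext p; simp [indicator]
    rw [this]
    refine Measurable.const_mul (Measurable.indicator (by fun_prop) ?_) _
    exact (hGo.preimage (by fun_prop : Continuous fun p : Ed d × Ed d =>
      p.2 + (1 / 2 : ℝ) ^ k • p.1)).measurableSet
  simp_rw [hterm]
  rw [lintegral_finsetSum _ (fun k _ => Measurable.lintegral_prod_right' (hmeas2 k))]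
  have hswap : ∀ k : ℕ, ∫⁻ w in B, ∫⁻ y in G, ENNReal.ofReal (((1 / 2 : ℝ) ^ k) ^ (-(2 * s))) *
        G.indicator (fun x => ENNReal.ofReal ((v x - v y) ^ 2)) (y + (1 / 2 : ℝ) ^ k • w)
      = ∫⁻ y in G, ∫⁻ w in B, ENNReal.ofReal (((1 / 2 : ℝ) ^ k) ^ (-(2 * s))) *
        G.indicator (fun x => ENNReal.ofReal ((v x - v y) ^ 2)) (y + (1 / 2 : ℝ) ^ k • w) :=
    fun k => lintegral_lintegral_swap (hmeas2 k).aemeasurable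
  simp_rw [hswap]
  rw [← lintegral_finsetSum _ (fun k _ => Measurable.lintegral_prod_left' (hmeas2 k)),
    ENNReal.ofReal_mul (by positivity), ← gag_lintegral hd hs hGo hG hv,
    ← lintegral_const_mul' _ _ ENNReal.ofReal_ne_top]
  refine lintegral_mono fun y => ?_
  set Φ : Ed d → ℝ≥0∞ := G.indicator fun x =>
    ENNReal.ofReal ((‖w0‖ + r) ^ ((d : ℝ) + 2 * s)) *
      ENNReal.ofReal ((v y - v x) ^ 2 / dist y x ^ ((d : ℝ) + 2 * s)) with hΦ
  have hk : ∀ k ∈ Finset.range n, ∫⁻ w in B, ENNReal.ofReal (((1 / 2 : ℝ) ^ k) ^ (-(2 * s))) *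
        G.indicator (fun x => ENNReal.ofReal ((v x - v y) ^ 2)) (y + (1 / 2 : ℝ) ^ k • w)
      ≤ ∫⁻ x in S y k, Φ x := by
    intro k _
    set t : ℝ := (1 / 2 : ℝ) ^ k with ht
    have htp : 0 < t := by positivity
    set F : Ed d → ℝ≥0∞ := (S y k).indicator (fun x => ENNReal.ofReal (t ^ (-(2 * s))) *
        G.indicator (fun x => ENNReal.ofReal ((v x - v y) ^ 2)) x) with hF
    have hFm : Measurable F := by
      refine Measurable.indicator (Measurable.const_mul (Measurable.indicator (by fun_prop)
        hGo.measurableSet) _) (hSm y k)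
    have h1 : ∫⁻ w in B, ENNReal.ofReal (t ^ (-(2 * s))) *
        G.indicator (fun x => ENNReal.ofReal ((v x - v y) ^ 2)) (y + t • w)
        = ∫⁻ w, F (y + t • w) := by
      rw [← lintegral_indicator measurableSet_ball]
      congr 1
      ext w
      have : y + t • w ∈ S y k ↔ w ∈ B := by
        simp only [hS, mem_ofPred_eq, add_sub_cancel_left, ← ht, smul_smul, inv_mul_cancel₀ htp.ne',
          one_smul]
      by_cases hw : w ∈ B
      · rw [indicator_of_mem hw, hF, indicator_of_mem (this.2 hw)]
      · rw [indicator_of_notMem hw, hF, indicator_of_notMem (fun h => hw (this.1 h))]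
    rw [h1, lint_scale htp y hFm, ← lintegral_const_mul' _ _ ENNReal.ofReal_ne_top,
      ← lintegral_indicator (hSm y k)]
    refine lintegral_mono fun x => ?_
    by_cases hx : x ∈ S y k
    swap
    · simp [hF, hx]
    by_cases hxG : x ∈ G
    swap
    · simp only [hF, indicator_of_mem hx, indicator_of_notMem hxG, mul_zero]; exact zero_le
    simp only [hF, hΦ, indicator_of_mem hx, indicator_of_mem hxG]
    rw [← ENNReal.ofReal_mul (by positivity), ← ENNReal.ofReal_mul (by positivity),
      ← ENNReal.ofReal_mul (by positivity)]
    apply ENNReal.ofReal_le_ofReal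
    obtain ⟨ha, hb'⟩ := hnorm y k x hx
    have hxy : 0 < dist y x := by
      rw [dist_comm, dist_eq_norm]
      by_contra hcon
      have : ‖x - y‖ = 0 := le_antisymm (not_lt.1 hcon) (norm_nonneg _)
      rw [this] at ha
      linarith
    have hle : dist y x ≤ (‖w0‖ + r) * t := by
      rw [dist_comm, dist_eq_norm]
      have : ‖x - y‖ = ‖x - y‖ * 2 ^ k * t := by
        rw [ht, mul_assoc, ← mul_pow]; norm_num
      rw [this]; gcongr
    have h5 : dist y x ^ ((d : ℝ) + 2 * s) ≤ (‖w0‖ + r) ^ ((d : ℝ) + 2 * s) * t ^ ((d : ℝ) + 2 * s) := by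
      rw [← Real.mul_rpow hb.le htp.le]
      exact Real.rpow_le_rpow hxy.le hle (by positivity)
    have h6 : t ^ (-(d : ℝ)) * t ^ (-(2 * s)) = (t ^ ((d : ℝ) + 2 * s))⁻¹ := by
      rw [← Real.rpow_add htp, ← Real.rpow_neg htp.le]; congr 1; ring
    rw [← mul_assoc, h6, ← mul_div_assoc, le_div_iff₀ (by positivity), ← neg_sub (v x) (v y), neg_sq,
      mul_right_comm]
    refine mul_le_mul_of_nonneg_right ?_ (sq_nonneg _)
    rw [inv_mul_le_iff₀ (by positivity)]
    linarith [h5]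
  refine (Finset.sum_le_sum hk).trans ?_
  rw [← lintegral_biUnion_finset (hdisj y) (fun k _ => hSm y k)]
  refine (setLIntegral_le_lintegral _ _).trans ?_
  rw [hΦ, lintegral_indicator hGo.measurableSet, lintegral_const_mul' _ _ ENNReal.ofReal_ne_top]

/-- `L²` mass of `h` on the layer of points of `G` leaving `G` under the shift by `-a`. -/
def layD {d : ℕ} (G : Set (Ed d)) (h : Ed d → ℝ) (a : Ed d) : ℝ :=
  ∫ y, {y | y ∈ G ∧ y - a ∉ G}.indicator (fun y => h y ^ 2) y

lemma layD_nonneg {d : ℕ} (G : Set (Ed d)) (h : Ed d → ℝ) (a : Ed d) : 0 ≤ layD G h a :=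
  integral_nonneg fun _ => indicator_nonneg (fun _ _ => sq_nonneg _) _

lemma lay_set_meas {d : ℕ} {G : Set (Ed d)} (hG : IsOpen G) (a b : Ed d) :
    MeasurableSet {y | y - a ∈ G ∧ y - b ∉ G} :=
  (hG.preimage (by fun_prop : Continuous fun y : Ed d => y - a)).measurableSet.inter
    (hG.preimage (by fun_prop : Continuous fun y : Ed d => y - b)).measurableSet.compl

lemma lay_set_meas' {d : ℕ} {G : Set (Ed d)} (hG : IsOpen G) (b : Ed d) :
    MeasurableSet {y | y ∈ G ∧ y - b ∉ G} := by
  simpa using lay_set_meas hG 0 b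

lemma memLp_shift {d : ℕ} {h : Ed d → ℝ} (hh : MemLp h 2 volume) (a : Ed d) :
    MemLp (fun y => h (y + a)) 2 volume :=
  hh.comp_measurePreserving (measurePreserving_add_right volume a)

lemma memLp_shift' {d : ℕ} {h : Ed d → ℝ} (hh : MemLp h 2 volume) (a : Ed d) :
    MemLp (fun y => h (y - a)) 2 volume := by
  simpa [sub_eq_add_neg] using memLp_shift hh (-a)

lemma hardy_step {d : ℕ} {G : Set (Ed d)} (hGo : IsOpen G) {h : Ed d → ℝ}
    (hh : MemLp h 2 volume) {a : Ed d} (h0 : ∀ y, h y ≠ 0 → y ∈ G)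
    (h1 : ∀ y, h y ≠ 0 → y + a ∈ G)
    (h2 : ∀ y, h y ≠ 0 → y - (2 : ℝ) • a ∈ G → y - a ∈ G) {ε : ℝ} (hε : 0 < ε) :
    (2 + ε) * layD G h a ≤ (1 + ε) * layD G h ((2 : ℝ) • a) + (1 + ε⁻¹) * oscD G h a := by
  have i0 : Integrable (fun y => h y ^ 2) := hh.integrable_sq
  have i1 : Integrable (fun y => h (y + a) ^ 2) := (memLp_shift hh a).integrable_sq
  have i2 : Integrable (fun y => (h (y + a) - h y) ^ 2) := ((memLp_shift hh a).sub hh).integrable_sq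
  set P : Set (Ed d) := {y | y ∈ G ∧ y - a ∉ G} with hP
  set Q : Set (Ed d) := {y | y - a ∈ G ∧ y - (2 : ℝ) • a ∉ G} with hQ
  set P2 : Set (Ed d) := {y | y ∈ G ∧ y - (2 : ℝ) • a ∉ G} with hP2
  have hPm : MeasurableSet P := lay_set_meas' hGo a
  have hQm : MeasurableSet Q := lay_set_meas hGo a _
  have hP2m : MeasurableSet P2 := lay_set_meas' hGo _
  have hOm := osc_set_meas hGo a
  set O : Set (Ed d) := {y | y ∈ G ∧ y + a ∈ G} with hO
  have hosc : oscD G h a = ∫ y, O.indicator (fun y => (h (y + a) - h y) ^ 2) y := by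
    unfold oscD; rw [integral_indicator hOm]
  have hL : ∫ y, Q.indicator (fun y => h y ^ 2) y = ∫ y, P.indicator (fun y => h (y + a) ^ 2) y := by
    rw [← integral_add_right_eq_self _ a]
    congr 1
    ext y
    have e1 : y + a - a = y := by abel
    have e2 : y + a - (2 : ℝ) • a = y - a := by rw [two_smul]; abel
    by_cases hy : y ∈ P
    · have : y + a ∈ Q := by
        simp only [hQ, mem_ofPred_eq, e1, e2]; exact hy
      rw [indicator_of_mem this, indicator_of_mem hy]
    · have : y + a ∉ Q := by
        simp only [hQ, mem_ofPred_eq, e1, e2]; exact hy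
      rw [indicator_of_notMem this, indicator_of_notMem hy]
  have A : layD G h a ≤ (1 + ε) * (∫ y, Q.indicator (fun y => h y ^ 2) y)
      + (1 + ε⁻¹) * oscD G h a := by
    rw [hL, hosc, ← integral_const_mul, ← integral_const_mul,
      ← integral_add ((i1.indicator hPm).const_mul _) ((i2.indicator hOm).const_mul _)]
    refine integral_mono (i0.indicator hPm)
      (((i1.indicator hPm).const_mul _).add ((i2.indicator hOm).const_mul _)) fun y => ?_
    have hn : 0 ≤ (1 + ε⁻¹) * O.indicator (fun y => (h (y + a) - h y) ^ 2) y :=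
      mul_nonneg (by positivity) (indicator_nonneg (fun _ _ => sq_nonneg _) _)
    simp only [← hP]
    by_cases hy : y ∈ P
    · rw [indicator_of_mem hy, indicator_of_mem hy]
      by_cases hz : h y = 0
      · rw [hz]
        have : 0 ≤ (1 + ε) * h (y + a) ^ 2 := by positivity
        simp only [ne_eq, OfNat.ofNat_ne_zero, not_false_eq_true, zero_pow]
        rw [hz] at *
        linarith
      · have : y ∈ O := ⟨h0 y hz, h1 y hz⟩
        rw [indicator_of_mem this]
        set p := h (y + a)
        set q := h y
        have : (1 + ε) * p ^ 2 + (1 + ε⁻¹) * (p - q) ^ 2 - q ^ 2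
          = ε⁻¹ * ((1 + ε) * p - q) ^ 2 := by
          field_simp; ring
        have : 0 ≤ ε⁻¹ * ((1 + ε) * p - q) ^ 2 := by positivity
        linarith
    · rw [indicator_of_notMem hy, indicator_of_notMem hy]
      linarith
  have Bd : (∫ y, Q.indicator (fun y => h y ^ 2) y) + layD G h a ≤ layD G h ((2 : ℝ) • a) := by
    unfold layD
    rw [← integral_add (i0.indicator hQm) (i0.indicator hPm)]
    refine integral_mono ((i0.indicator hQm).add (i0.indicator hPm)) (i0.indicator hP2m) fun y => ?_
    by_cases hz : h y = 0
    · simp [indicator, hz]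
    · have hy := h0 y hz
      have h2' := h2 y hz
      have hsq := sq_nonneg (h y)
      by_cases ha : y - a ∈ G <;> by_cases hb : y - (2 : ℝ) • a ∈ G
      · simp [indicator, ha, hb, hQ, hP]
      · simp [indicator, ha, hb, hy, hQ, hP]
      · exact absurd (h2' hb) ha
      · simp [indicator, ha, hb, hy, hQ, hP]
  have hε1 : 0 < 1 + ε := by positivity
  nlinarith [mul_le_mul_of_nonneg_left Bd hε1.le]

lemma diff_le_lay {d : ℕ} {G : Set (Ed d)} (hGo : IsOpen G) {h : Ed d → ℝ}
    (hh : MemLp h 2 volume) {a : Ed d} (h0 : ∀ y, h y ≠ 0 → y ∈ G)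
    (h1 : ∀ y, h y ≠ 0 → y + a ∈ G) :
    ∫ y, (h (y - a) - h y) ^ 2 ≤ oscD G h a + layD G h a := by
  have i0 : Integrable (fun y => h y ^ 2) := hh.integrable_sq
  have i2 : Integrable (fun y => (h (y - a) - h y) ^ 2) := ((memLp_shift' hh a).sub hh).integrable_sq
  have hPm : MeasurableSet {y | y ∈ G ∧ y - a ∉ G} := lay_set_meas' hGo a
  set O : Set (Ed d) := {y | y - a ∈ G ∧ y ∈ G} with hO
  have hOm : MeasurableSet O :=
    (hGo.preimage (by fun_prop : Continuous fun y : Ed d => y - a)).measurableSet.inter hGo.measurableSet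
  have hosc : oscD G h a = ∫ y, O.indicator (fun y => (h (y - a) - h y) ^ 2) y := by
    unfold oscD
    rw [← integral_indicator (osc_set_meas hGo a), ← integral_sub_right_eq_self _ a]
    congr 1
    ext y
    by_cases h1 : y ∈ G <;> by_cases h2 : y - a ∈ G <;> simp [indicator, h1, h2, hO]
    ring
  rw [hosc]
  unfold layD
  rw [← integral_add (i2.indicator hOm) (i0.indicator hPm)]
  refine integral_mono i2 ((i2.indicator hOm).add (i0.indicator hPm)) fun y => ?_
  by_cases hy : y ∈ G <;> by_cases ha : y - a ∈ G
  · simp [indicator, hy, ha, hO]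
  · have : h (y - a) = 0 := by
      by_contra hc; exact ha (h0 _ hc)
    simp [indicator, hy, ha, hO, this]
  · have e1 : h y = 0 := by
      by_contra hc; exact hy (h0 _ hc)
    have e2 : h (y - a) = 0 := by
      by_contra hc; exact hy (by simpa using h1 _ hc)
    simp [indicator, hy, hO, e1, e2]
  · have e1 : h y = 0 := by
      by_contra hc; exact hy (h0 _ hc)
    have : h (y - a) = 0 := by
      by_contra hc; exact ha (h0 _ hc)
    simp [indicator, hy, hO, e1, this]

lemma hardy_seq {β : ℝ} (hβ1 : 1 ≤ β) (hβ2 : β < 2) : ∃ ε C : ℝ, 0 < ε ∧ 0 < C ∧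
    ∀ (D O : ℕ → ℝ), (∀ k, 0 ≤ D k) → (∀ k, 0 ≤ O k) →
      (∀ k, (2 + ε) * D (k + 1) ≤ (1 + ε) * D k + (1 + ε⁻¹) * O (k + 1)) →
      ∀ n, ∑ k ∈ Finset.range n, β ^ k * D k ≤
        C * (D 0 + ∑ k ∈ Finset.range n, β ^ k * O k) := by
  set ε := (2 - β) / 2 with hε
  have hε0 : 0 < ε := by rw [hε]; linarith
  set q := β * (1 + ε) / (2 + ε) with hq
  have hq1 : q < 1 := by
    rw [hq, div_lt_one (by positivity)]
    nlinarith
  have hq0 : 0 ≤ q := by positivity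
  set c := (1 + ε⁻¹) / (2 + ε) with hc
  have hc0 : 0 < c := by positivity
  refine ⟨ε, (1 + c) / (1 - q), hε0, div_pos (by positivity) (by linarith), ?_⟩
  intro D O hD hO hrec n
  have hSO : ∀ m, 0 ≤ ∑ k ∈ Finset.range m, β ^ k * O k := fun m =>
    Finset.sum_nonneg fun k _ => mul_nonneg (by positivity) (hO k)
  have hstep : ∀ m, ∑ k ∈ Finset.range (m + 1), β ^ k * D k ≤
      D 0 + q * ∑ k ∈ Finset.range m, β ^ k * D k + c * ∑ k ∈ Finset.range (m + 1), β ^ k * O k := by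
    intro m
    rw [Finset.sum_range_succ' (fun k => β ^ k * D k), Finset.sum_range_succ' (fun k => β ^ k * O k)]
    have : ∑ k ∈ Finset.range m, β ^ (k + 1) * D (k + 1) ≤
        ∑ k ∈ Finset.range m, (q * (β ^ k * D k) + c * (β ^ (k + 1) * O (k + 1))) := by
      refine Finset.sum_le_sum fun k _ => ?_
      have h1 : D (k + 1) ≤ ((1 + ε) * D k + (1 + ε⁻¹) * O (k + 1)) / (2 + ε) := by
        rw [le_div_iff₀ (by positivity), mul_comm]; exact hrec k
      calc β ^ (k + 1) * D (k + 1) ≤ β ^ (k + 1) * (((1 + ε) * D k + (1 + ε⁻¹) * O (k + 1)) / (2 + ε)) := by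
            gcongr
        _ = _ := by rw [hq, hc]; field_simp; ring
    rw [Finset.sum_add_distrib, ← Finset.mul_sum, ← Finset.mul_sum] at this
    have := mul_nonneg hc0.le (hO 0)
    simp only [pow_zero, one_mul]
    linarith
  have h1q : 0 < 1 - q := by linarith
  rw [div_mul_eq_mul_div, le_div_iff₀ h1q]
  rcases n with _ | m
  · simp; exact mul_nonneg (by positivity) (hD 0)
  · have h := hstep m
    have hmono : ∑ k ∈ Finset.range m, β ^ k * D k ≤ ∑ k ∈ Finset.range (m + 1), β ^ k * D k := by
      rw [Finset.sum_range_succ]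
      have := mul_nonneg (pow_nonneg (by linarith : (0:ℝ) ≤ β) m) (hD m)
      linarith
    have := mul_le_mul_of_nonneg_left hmono hq0
    have h3 := hSO (m + 1)
    have h4 := mul_nonneg hc0.le (hD 0)
    nlinarith

lemma hardy_sum {θ : ℝ} (hθ0 : 0 ≤ θ) (hθ : θ < 1 / 2) : ∃ C : ℝ, 0 < C ∧
    ∀ (d : ℕ) (G : Set (Ed d)) (h : Ed d → ℝ) (z : Ed d), IsOpen G → MemLp h 2 volume →
      (∀ y, h y ≠ 0 → y ∈ G) →
      (∀ y, h y ≠ 0 → ∀ t : ℝ, 0 ≤ t → t ≤ 1 → y + t • z ∈ G) →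
      (∀ y, h y ≠ 0 → ∀ t : ℝ, 0 ≤ t → t ≤ 1 / 2 → y - (2 : ℝ) • (t • z) ∈ G → y - t • z ∈ G) →
      ∀ n, ∑ k ∈ Finset.range n, ((1 / 2 : ℝ) ^ k) ^ (-(2 * θ)) *
          ∫ y, (h (y - (1 / 2 : ℝ) ^ k • z) - h y) ^ 2 ≤
        C * ((∫ y, h y ^ 2) + ∑ k ∈ Finset.range n, ((1 / 2 : ℝ) ^ k) ^ (-(2 * θ)) *
          oscD G h ((1 / 2 : ℝ) ^ k • z)) := by
  have hβ1 : (1 : ℝ) ≤ 2 ^ (2 * θ) := Real.one_le_rpow (by norm_num) (by linarith)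
  have hβ2 : (2 : ℝ) ^ (2 * θ) < 2 := by
    calc (2 : ℝ) ^ (2 * θ) < 2 ^ (1 : ℝ) := Real.rpow_lt_rpow_of_exponent_lt (by norm_num) (by linarith)
      _ = 2 := by simp
  obtain ⟨ε, C, hε, hC, H⟩ := hardy_seq hβ1 hβ2
  refine ⟨C + 1, by linarith, ?_⟩
  intro d G h z hGo hh h0 h1 h2 n
  have hw : ∀ k : ℕ, ((1 / 2 : ℝ) ^ k) ^ (-(2 * θ)) = (2 ^ (2 * θ)) ^ k := by
    intro k
    rw [← Real.rpow_natCast, ← Real.rpow_natCast, ← Real.rpow_mul (by norm_num),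
      ← Real.rpow_mul (by norm_num), one_div, Real.inv_rpow (by norm_num), ← Real.rpow_neg (by norm_num)]
    congr 1; ring
  simp_rw [hw]
  have ht0 : ∀ k : ℕ, (0 : ℝ) ≤ (1 / 2) ^ k := fun k => by positivity
  have ht1 : ∀ k : ℕ, (1 / 2 : ℝ) ^ k ≤ 1 := fun k => pow_le_one₀ (by norm_num) (by norm_num)
  have key := H (fun k => layD G h ((1 / 2 : ℝ) ^ k • z)) (fun k => oscD G h ((1 / 2 : ℝ) ^ k • z))
    (fun k => layD_nonneg _ _ _) (fun k => oscD_nonneg _ _ _) (fun k => by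
      have e : (2 : ℝ) • ((1 / 2 : ℝ) ^ (k + 1) • z) = (1 / 2 : ℝ) ^ k • z := by
        rw [smul_smul, pow_succ]; congr 1; ring
      have := hardy_step hGo hh (a := (1 / 2 : ℝ) ^ (k + 1) • z) h0
        (fun y hy => h1 y hy _ (ht0 _) (ht1 _))
        (fun y hy => h2 y hy _ (ht0 _) (by
          rw [pow_succ]; have := ht1 k; linarith)) hε
      rwa [e] at this) n
  have hD0 : layD G h ((1 / 2 : ℝ) ^ 0 • z) ≤ ∫ y, h y ^ 2 := by
    unfold layD
    refine integral_mono (hh.integrable_sq.indicator (lay_set_meas' hGo _)) hh.integrable_sq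
      fun y => ?_
    exact indicator_le_self' (fun _ _ => sq_nonneg _) _
  have hsum : ∑ k ∈ Finset.range n, (2 ^ (2 * θ)) ^ k * ∫ y, (h (y - (1 / 2 : ℝ) ^ k • z) - h y) ^ 2
      ≤ ∑ k ∈ Finset.range n, ((2 ^ (2 * θ)) ^ k * oscD G h ((1 / 2 : ℝ) ^ k • z) +
        (2 ^ (2 * θ)) ^ k * layD G h ((1 / 2 : ℝ) ^ k • z)) := by
    refine Finset.sum_le_sum fun k _ => ?_
    rw [← mul_add]
    exact mul_le_mul_of_nonneg_left
      (diff_le_lay hGo hh h0 (fun y hy => h1 y hy _ (ht0 _) (ht1 _))) (by positivity)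
  rw [Finset.sum_add_distrib] at hsum
  have hh0 : 0 ≤ ∫ y, h y ^ 2 := integral_nonneg fun _ => sq_nonneg _
  have := mul_le_mul_of_nonneg_left hD0 hC.le
  nlinarith

section kernel

variable {d : ℕ}

lemma byparts {H ρ : Ed d → ℝ} (hH : ContDiff ℝ 1 H) (hρ : ContDiff ℝ 1 ρ)
    (hρc : HasCompactSupport ρ) (e c : Ed d) {s : ℝ} (hs : s ≠ 0) :
    ∫ z, fderiv ℝ H (s • z + c) e * ρ z = -s⁻¹ * ∫ z, H (s • z + c) * fderiv ℝ ρ z e := by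
  have hHd := hH.differentiable (by simp)
  have hρd := hρ.differentiable (by simp)
  have hHc := hH.continuous_fderiv (by simp)
  have hρc' := hρ.continuous_fderiv (by simp)
  have hcont : Continuous fun z : Ed d => s • z + c := by fun_prop
  have hfd : ∀ z, fderiv ℝ (fun z => H (s • z + c)) z e = s * fderiv ℝ H (s • z + c) e := by
    intro z
    have h1 : HasFDerivAt (fun z : Ed d => s • z + c) (s • ContinuousLinearMap.id ℝ (Ed d)) z :=
      ((hasFDerivAt_id z).const_smul s).add_const c
    have h2 := (hHd (s • z + c)).hasFDerivAt.comp z h1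
    have : fderiv ℝ (fun z => H (s • z + c)) z = _ := h2.fderiv
    rw [this]
    simp
  have c1 : Continuous fun z => fderiv ℝ H (s • z + c) e :=
    (hHc.comp hcont).clm_apply continuous_const
  have c2 : Continuous fun z => fderiv ℝ ρ z e := hρc'.clm_apply continuous_const
  have hsup2 : HasCompactSupport fun z => fderiv ℝ ρ z e := hρc.fderiv_apply (𝕜 := ℝ) e
  have key := integral_mul_fderiv_eq_neg_fderiv_mul_of_integrable (μ := (volume : Measure (Ed d)))
    (f := fun z => H (s • z + c)) (g := ρ) (v := e) (by
      simp_rw [hfd]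
      exact ((continuous_const.mul c1).mul hρ.continuous).integrable_of_hasCompactSupport
        hρc.mul_left)
    (((hH.continuous.comp hcont).mul c2).integrable_of_hasCompactSupport hsup2.mul_left)
    (((hH.continuous.comp hcont).mul hρ.continuous).integrable_of_hasCompactSupport hρc.mul_left)
    (fun x _ => (hHd.comp (by fun_prop : Differentiable ℝ fun z : Ed d => s • z + c)) x)
    (fun x _ => hρd x)
  rw [key]
  simp_rw [hfd, mul_assoc]
  rw [integral_const_mul]
  field_simp

lemma integral_fderiv_zero {ρ : Ed d → ℝ} (hρ : ContDiff ℝ 1 ρ)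
    (hρc : HasCompactSupport ρ) (e : Ed d) : ∫ z, fderiv ℝ ρ z e = 0 := by
  have := byparts (H := fun _ => (1 : ℝ)) contDiff_const hρ hρc e 0 (one_ne_zero)
  simpa using this.symm

/-- The two-scale smoothing of the directional derivative of `H`. -/
def UD (H ρ : Ed d → ℝ) (e : Ed d) (s t : ℝ) : ℝ :=
  ∫ p : Ed d × Ed d, fderiv ℝ H (s • p.1 + t • p.2) e * (ρ p.1 * ρ p.2)

lemma cs_prod {a b : Ed d → ℝ} (ha : HasCompactSupport a) (hb : HasCompactSupport b) :
    HasCompactSupport fun p : Ed d × Ed d => a p.1 * b p.2 := by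
  refine HasCompactSupport.intro (K := tsupport a ×ˢ tsupport b) (ha.isCompact.prod hb.isCompact) ?_
  intro p hp
  by_contra hne
  apply hp
  exact ⟨subset_tsupport _ (fun h => hne (by simp [h])), subset_tsupport _ (fun h => hne (by simp [h]))⟩

lemma UD_swap (H ρ : Ed d → ℝ) (e : Ed d) (s t : ℝ) : UD H ρ e s t = UD H ρ e t s := by
  unfold UD
  rw [Measure.volume_eq_prod, ← integral_prod_swap]
  congr 1
  ext p
  simp only [Prod.fst_swap, Prod.snd_swap]
  rw [add_comm, mul_comm (ρ p.2)]

lemma UD_eq {H ρ : Ed d → ℝ} (hH : ContDiff ℝ 1 H) (hρ : ContDiff ℝ 1 ρ)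
    (hρc : HasCompactSupport ρ) (e : Ed d) {s : ℝ} (hs : s ≠ 0) (t : ℝ) :
    UD H ρ e s t = ∫ p : Ed d × Ed d,
      (-s⁻¹ * H (s • p.1 + t • p.2)) * (fderiv ℝ ρ p.1 e * ρ p.2) := by
  have hHc := hH.continuous_fderiv (by simp)
  have hρc' := hρ.continuous_fderiv (by simp)
  have cρ := hρ.continuous
  have cH := hH.continuous
  have hsup2 : HasCompactSupport fun z => fderiv ℝ ρ z e := hρc.fderiv_apply (𝕜 := ℝ) e
  have c2 : Continuous fun z => fderiv ℝ ρ z e := hρc'.clm_apply continuous_const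
  have c1 : Continuous fun z => fderiv ℝ H z e := hHc.clm_apply continuous_const
  have i1 : Integrable (fun p : Ed d × Ed d => fderiv ℝ H (s • p.1 + t • p.2) e * (ρ p.1 * ρ p.2))
      (volume.prod volume) := by
    refine Continuous.integrable_of_hasCompactSupport ?_ (cs_prod hρc hρc).mul_left
    have := c1.comp (by fun_prop : Continuous fun p : Ed d × Ed d => s • p.1 + t • p.2)
    simp only [Function.comp_def] at this
    fun_prop
  have i2 : Integrable (fun p : Ed d × Ed d => (-s⁻¹ * H (s • p.1 + t • p.2)) *
      (fderiv ℝ ρ p.1 e * ρ p.2)) (volume.prod volume) := by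
    refine Continuous.integrable_of_hasCompactSupport ?_ (cs_prod hsup2 hρc).mul_left
    have := c2.comp (continuous_fst (X := Ed d) (Y := Ed d))
    simp only [Function.comp_def] at this
    fun_prop
  unfold UD
  rw [Measure.volume_eq_prod, integral_prod_symm _ i1, integral_prod_symm _ i2]
  congr 1
  ext w
  have h1 := byparts hH hρ hρc e (t • w) hs
  have e1 : ∀ z, fderiv ℝ H (s • z + t • w) e * (ρ z * ρ w)
      = (fderiv ℝ H (s • z + t • w) e * ρ z) * ρ w := fun z => by ring
  have e2 : ∀ z, (-s⁻¹ * H (s • z + t • w)) * (fderiv ℝ ρ z e * ρ w)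
      = (-s⁻¹) * (H (s • z + t • w) * fderiv ℝ ρ z e) * ρ w := fun z => by ring
  simp only [e1, e2]
  rw [integral_mul_const, integral_mul_const, integral_const_mul, h1]

/-- Mixed second difference. -/
def ddD (H : Ed d → ℝ) (s t' t : ℝ) (p : Ed d × Ed d) : ℝ :=
  H (s • p.1 + t' • p.2) - H (s • p.1 + t • p.2) - H (t' • p.2) + H (t • p.2)

lemma UD_diff {H ρ : Ed d → ℝ} (hH : ContDiff ℝ 1 H) (hρ : ContDiff ℝ 1 ρ)
    (hρc : HasCompactSupport ρ) (e : Ed d) {s : ℝ} (hs : s ≠ 0) (t' t : ℝ) :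
    UD H ρ e s t' - UD H ρ e s t = ∫ p : Ed d × Ed d,
      (-s⁻¹ * ddD H s t' t p) * (fderiv ℝ ρ p.1 e * ρ p.2) := by
  have hρc' := hρ.continuous_fderiv (by simp)
  have cρ := hρ.continuous
  have cH := hH.continuous
  have hsup2 : HasCompactSupport fun z => fderiv ℝ ρ z e := hρc.fderiv_apply (𝕜 := ℝ) e
  have c2 : Continuous fun z => fderiv ℝ ρ z e := hρc'.clm_apply continuous_const
  have hz : ∀ τ : ℝ, ∫ p : Ed d × Ed d, (-s⁻¹ * H (τ • p.2)) * (fderiv ℝ ρ p.1 e * ρ p.2) = 0 := by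
    intro τ
    have : (fun p : Ed d × Ed d => (-s⁻¹ * H (τ • p.2)) * (fderiv ℝ ρ p.1 e * ρ p.2))
        = fun p => (fderiv ℝ ρ p.1 e) * (-s⁻¹ * H (τ • p.2) * ρ p.2) := by ext p; ring
    rw [this, Measure.volume_eq_prod,
      integral_prod_mul (fun z => fderiv ℝ ρ z e) (fun w => -s⁻¹ * H (τ • w) * ρ w),
      integral_fderiv_zero hρ hρc, zero_mul]
  have hIntg : ∀ J : Ed d × Ed d → ℝ, Continuous J →
      Integrable (fun p : Ed d × Ed d => (-s⁻¹ * J p) * (fderiv ℝ ρ p.1 e * ρ p.2)) := by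
    intro J hJ
    refine Continuous.integrable_of_hasCompactSupport ?_ (cs_prod hsup2 hρc).mul_left
    have := c2.comp (continuous_fst (X := Ed d) (Y := Ed d))
    simp only [Function.comp_def] at this
    fun_prop
  have i1 := hIntg (fun p => H (s • p.1 + t' • p.2)) (by fun_prop)
  have i2 := hIntg (fun p => H (s • p.1 + t • p.2)) (by fun_prop)
  have i3 := hIntg (fun p => H (t' • p.2)) (by fun_prop)
  have i4 := hIntg (fun p => H (t • p.2)) (by fun_prop)
  have hexp : (fun p : Ed d × Ed d => (-s⁻¹ * ddD H s t' t p) * (fderiv ℝ ρ p.1 e * ρ p.2))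
      = fun p => (-s⁻¹ * H (s • p.1 + t' • p.2)) * (fderiv ℝ ρ p.1 e * ρ p.2)
        - (-s⁻¹ * H (s • p.1 + t • p.2)) * (fderiv ℝ ρ p.1 e * ρ p.2)
        - (-s⁻¹ * H (t' • p.2)) * (fderiv ℝ ρ p.1 e * ρ p.2)
        + (-s⁻¹ * H (t • p.2)) * (fderiv ℝ ρ p.1 e * ρ p.2) := by
    ext p; unfold ddD; ring
  have e4 := integral_add ((i1.sub i2).sub i3) i4
  have e3 := integral_sub (i1.sub i2) i3
  have e2 := integral_sub i1 i2
  simp only [Pi.sub_apply] at e4 e3 e2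
  rw [hexp, e4, e3, e2, hz, hz, UD_eq hH hρ hρc e hs, UD_eq hH hρ hρc e hs]
  ring

/-- Accumulated kernel integrand. -/
def JD (H : Ed d → ℝ) : ℕ → Ed d × Ed d → ℝ
  | 0 => fun p => -H (p.1 + p.2)
  | (k + 1) => fun p => JD H k p +
      (-((1 / 2 : ℝ) ^ (k + 1))⁻¹ * ddD H ((1 / 2 : ℝ) ^ (k + 1)) ((1 / 2 : ℝ) ^ (k + 1)) ((1 / 2 : ℝ) ^ k) p
      + -((1 / 2 : ℝ) ^ k)⁻¹ * ddD H ((1 / 2 : ℝ) ^ k) ((1 / 2 : ℝ) ^ (k + 1)) ((1 / 2 : ℝ) ^ k) p)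

lemma ddD_cont {H : Ed d → ℝ} (hH : Continuous H) (s t' t : ℝ) : Continuous (ddD H s t' t) := by
  unfold ddD; fun_prop

lemma JD_cont {H : Ed d → ℝ} (hH : Continuous H) (n : ℕ) : Continuous (JD H n) := by
  induction n with
  | zero => unfold JD; fun_prop
  | succ k ih =>
    unfold JD
    have := ddD_cont hH
    fun_prop

lemma UD_JD {H ρ : Ed d → ℝ} (hH : ContDiff ℝ 1 H) (hρ : ContDiff ℝ 1 ρ)
    (hρc : HasCompactSupport ρ) (e : Ed d) (n : ℕ) :
    UD H ρ e ((1 / 2 : ℝ) ^ n) ((1 / 2 : ℝ) ^ n) =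
      ∫ p : Ed d × Ed d, JD H n p * (fderiv ℝ ρ p.1 e * ρ p.2) := by
  have hρc' := hρ.continuous_fderiv (by simp)
  have cρ := hρ.continuous
  have hsup2 : HasCompactSupport fun z => fderiv ℝ ρ z e := hρc.fderiv_apply (𝕜 := ℝ) e
  have c2 : Continuous fun z => fderiv ℝ ρ z e := hρc'.clm_apply continuous_const
  have hIntg : ∀ J : Ed d × Ed d → ℝ, Continuous J →
      Integrable (fun p : Ed d × Ed d => J p * (fderiv ℝ ρ p.1 e * ρ p.2)) := by
    intro J hJ
    refine Continuous.integrable_of_hasCompactSupport ?_ (cs_prod hsup2 hρc).mul_left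
    have := c2.comp (continuous_fst (X := Ed d) (Y := Ed d))
    simp only [Function.comp_def] at this
    fun_prop
  induction n with
  | zero =>
    rw [UD_eq hH hρ hρc e (by simp)]
    simp [JD]
  | succ k ih =>
    set t : ℝ := (1 / 2 : ℝ) ^ k with ht
    set t' : ℝ := (1 / 2 : ℝ) ^ (k + 1) with ht'
    have htp : t ≠ 0 := by positivity
    have htp' : t' ≠ 0 := by positivity
    have e1 : UD H ρ e t' t' = UD H ρ e t t + ((UD H ρ e t' t' - UD H ρ e t' t) +
        (UD H ρ e t t' - UD H ρ e t t)) := by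
      rw [UD_swap H ρ e t' t]; ring
    have hc := ddD_cont hH.continuous
    have hJ := JD_cont hH.continuous k
    have j1 := hIntg (fun p => -t'⁻¹ * ddD H t' t' t p) (by fun_prop)
    have j2 := hIntg (fun p => -t⁻¹ * ddD H t t' t p) (by fun_prop)
    have e3 := integral_add (hIntg _ hJ) (j1.add j2)
    simp only [Pi.add_apply] at e3
    rw [e1, UD_diff hH hρ hρc e htp', UD_diff hH hρ hρc e htp, ih, ← integral_add j1 j2, ← e3]
    congr 1
    ext p
    simp only [JD, ← ht, ← ht']
    ring

lemma UD_tendsto {H ρ : Ed d → ℝ} (hH : ContDiff ℝ 1 H) (hρ : Continuous ρ)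
    (hρc : HasCompactSupport ρ) (hρ1 : ∫ z, ρ z = 1) (e : Ed d) :
    Tendsto (fun n : ℕ => UD H ρ e ((1 / 2 : ℝ) ^ n) ((1 / 2 : ℝ) ^ n)) atTop
      (𝓝 (fderiv ℝ H 0 e)) := by
  have hHc := hH.continuous_fderiv (by simp)
  have c1 : Continuous fun z => fderiv ℝ H z e := hHc.clm_apply continuous_const
  have hK := hρc.isCompact.prod hρc.isCompact
  have hcont : Continuous fun τ : ℝ => ∫ p in tsupport ρ ×ˢ tsupport ρ,
      fderiv ℝ H (τ • (p : Ed d × Ed d).1 + τ • p.2) e * (ρ p.1 * ρ p.2) := by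
    refine continuous_parametric_integral_of_continuous ?_ hK
    have := c1.comp (by fun_prop : Continuous fun q : ℝ × (Ed d × Ed d) => q.1 • q.2.1 + q.1 • q.2.2)
    simp only [Function.comp_def] at this
    simp only [Function.uncurry_def]
    fun_prop
  have heq : ∀ τ : ℝ, UD H ρ e τ τ = ∫ p in tsupport ρ ×ˢ tsupport ρ,
      fderiv ℝ H (τ • (p : Ed d × Ed d).1 + τ • p.2) e * (ρ p.1 * ρ p.2) := by
    intro τ
    unfold UD
    rw [setIntegral_eq_integral_of_forall_compl_eq_zero]
    intro p hp
    have : ρ p.1 * ρ p.2 = 0 := by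
      by_contra hne
      apply hp
      exact ⟨subset_tsupport _ (fun h => hne (by simp [h])),
        subset_tsupport _ (fun h => hne (by simp [h]))⟩
    rw [this, mul_zero]
  have h0 : UD H ρ e 0 0 = fderiv ℝ H 0 e := by
    unfold UD
    simp only [zero_smul, add_zero]
    rw [integral_const_mul, Measure.volume_eq_prod, integral_prod_mul, hρ1]
    simp
  rw [← h0]
  simp_rw [heq]
  exact (hcont.tendsto 0).comp (tendsto_pow_atTop_nhds_zero_of_lt_one (by norm_num) (by norm_num))

lemma kernel_bound {H ρ : Ed d → ℝ} (hH : ContDiff ℝ 1 H) (hρ : ContDiff ℝ 1 ρ)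
    (hρc : HasCompactSupport ρ) (hρ1 : ∫ z, ρ z = 1) (e : Ed d) {B : Set (Ed d)}
    (hB : MeasurableSet B) {R : ℝ} (hR : 0 ≤ R)
    (hρB : ∀ z, z ∉ B → ρ z = 0) (hρB' : ∀ z, z ∉ B → fderiv ℝ ρ z e = 0)
    (hρR : ∀ z, |ρ z| ≤ R) (hρR' : ∀ z, |fderiv ℝ ρ z e| ≤ R)
    {M : ℝ≥0∞} (hM : ∀ n, ∫⁻ p in B ×ˢ B, ENNReal.ofReal |JD H n p| ≤ M) :
    ENNReal.ofReal |fderiv ℝ H 0 e| ≤ ENNReal.ofReal (R * R) * M := by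
  have hlim := (UD_tendsto hH hρ.continuous hρc hρ1 e).abs
  have hlim' := (ENNReal.continuous_ofReal.tendsto _).comp hlim
  refine le_of_tendsto' hlim' fun n => ?_
  simp only [Function.comp_def]
  rw [UD_JD hH hρ hρc e n, ← Real.norm_eq_abs, ofReal_norm]
  refine (enorm_integral_le_lintegral_enorm _).trans ?_
  calc ∫⁻ p : Ed d × Ed d, ‖JD H n p * (fderiv ℝ ρ p.1 e * ρ p.2)‖ₑ
      ≤ ∫⁻ p : Ed d × Ed d, (B ×ˢ B).indicator
          (fun p => ENNReal.ofReal (R * R) * ENNReal.ofReal |JD H n p|) p := by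
        refine lintegral_mono fun p => ?_
        by_cases hp : p ∈ B ×ˢ B
        · rw [indicator_of_mem hp, ← ofReal_norm, ← ENNReal.ofReal_mul (by positivity)]
          apply ENNReal.ofReal_le_ofReal
          rw [Real.norm_eq_abs, abs_mul, abs_mul, mul_comm]
          exact mul_le_mul_of_nonneg_right
            (mul_le_mul (hρR' _) (hρR _) (abs_nonneg _) hR) (abs_nonneg _)
        · have : fderiv ℝ ρ p.1 e * ρ p.2 = 0 := by
            by_cases h1 : p.1 ∈ B
            · have h2 : p.2 ∉ B := fun h2 => hp ⟨h1, h2⟩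
              rw [hρB _ h2, mul_zero]
            · rw [hρB' _ h1, zero_mul]
          rw [this]; simp
    _ = ENNReal.ofReal (R * R) * ∫⁻ p in B ×ˢ B, ENNReal.ofReal |JD H n p| := by
        rw [lintegral_indicator (hB.prod hB), lintegral_const_mul' _ _ ENNReal.ofReal_ne_top]
    _ ≤ _ := by gcongr; exact hM n

end kernel

section funH

variable {d : ℕ}

/-- Correlation function. -/
def HD (G : Set (Ed d)) (q f : Ed d → ℝ) (v : Ed d) : ℝ := ∫ x in G, q x * f (x + v)

lemma HD_contDiff {G : Set (Ed d)} (hG : Bornology.IsBounded G) {q f : Ed d → ℝ}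
    (hq : Continuous q) (hf : ContDiff ℝ 1 f) :
    ContDiff ℝ 1 (HD G q f) ∧ ∀ e, fderiv ℝ (HD G q f) 0 e = ∫ x in G, q x * fderiv ℝ f x e := by
  have hfc := hf.continuous
  have hfd := hf.differentiable (by simp)
  have hf' := hf.continuous_fderiv (by simp)
  have hK : IsCompact (closure G) := hG.isCompact_closure
  have cF' : Continuous fun p : Ed d × Ed d => q p.2 • fderiv ℝ f (p.2 + p.1) := by
    have := hf'.comp (by fun_prop : Continuous fun p : Ed d × Ed d => p.2 + p.1)
    simp only [Function.comp_def] at this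
    fun_prop
  have hIntg : ∀ v, IntegrableOn (fun x => q x • fderiv ℝ f (x + v)) G := by
    intro v
    have : Continuous fun x => q x • fderiv ℝ f (x + v) :=
      cF'.comp (by fun_prop : Continuous fun x : Ed d => (v, x))
    exact (this.continuousOn.integrableOn_compact hK).mono_set subset_closure
  have hD : ∀ v, HasFDerivAt (HD G q f) (∫ x in G, q x • fderiv ℝ f (x + v)) v := by
    intro v
    obtain ⟨C, hC⟩ := ((isCompact_closedBall v 1).prod hK).exists_bound_of_continuousOn
      cF'.continuousOn
    have hfin : volume G < ∞ := hG.measure_lt_top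
    refine hasFDerivAt_integral_of_dominated_of_fderiv_le (bound := fun _ => C)
      (F := fun v x => q x * f (x + v)) (F' := fun v x => q x • fderiv ℝ f (x + v))
      (closedBall_mem_nhds v one_pos) ?_ ?_ ?_ ?_ ?_ ?_
    · exact Eventually.of_forall fun w => (by fun_prop : Continuous fun x => q x * f (x + w)).aestronglyMeasurable
    · have : Continuous fun x => q x * f (x + v) := by fun_prop
      exact (this.continuousOn.integrableOn_compact hK).mono_set subset_closure
    · exact (hIntg v).aestronglyMeasurable
    · have h0 : ∀ᵐ x ∂(volume.restrict (closure G)), x ∈ closure G :=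
        ae_restrict_mem isClosed_closure.measurableSet
      have h1 : ∀ᵐ x ∂(volume.restrict G), x ∈ closure G :=
        (Measure.restrict_mono subset_closure le_rfl).absolutelyContinuous.ae_le h0
      filter_upwards [h1] with x hx w hw
      exact hC (w, x) ⟨hw, hx⟩
    · exact integrableOn_const hfin.ne
    · refine Eventually.of_forall fun x w _ => ?_
      have h2 : HasFDerivAt (fun w : Ed d => f (x + w)) (fderiv ℝ f (x + w)) w := by
        have := (hfd (x + w)).hasFDerivAt.comp w ((hasFDerivAt_id w).const_add x)
        simpa [Function.comp_def] using this
      exact h2.const_mul (q x)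
  have hcont : Continuous fun v => ∫ x in G, q x • fderiv ℝ f (x + v) := by
    have h3 := continuous_parametric_integral_of_continuous (μ := volume.restrict G)
      (f := fun v x => q x • fderiv ℝ f (x + v)) cF' hK
    have : ∀ v, ∫ x in closure G, q x • fderiv ℝ f (x + v) ∂(volume.restrict G)
        = ∫ x in G, q x • fderiv ℝ f (x + v) := by
      intro v
      rw [Measure.restrict_restrict isClosed_closure.measurableSet,
        inter_eq_self_of_subset_right subset_closure]
    simpa only [this] using h3
  refine ⟨contDiff_one_iff_hasFDerivAt.2 ⟨_, hcont, hD⟩, fun e => ?_⟩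
  rw [(hD 0).fderiv, ContinuousLinearMap.integral_apply (hIntg 0)]
  simp

end funH

section chart

variable {d : ℕ}

/-- Good local direction cone at `x0`. -/
structure ChartD (G : Set (Ed d)) (x0 : Ed d) (δ : ℝ) (w0 : Ed d) (r : ℝ) : Prop where
  hδ : 0 < δ
  hr : 0 < r
  hrw : 3 * r ≤ ‖w0‖
  hsmall : ‖w0‖ + r ≤ δ / 8
  hP : ∀ y ∈ G, y ∈ ball x0 δ → ∀ w ∈ ball w0 r, ∀ t : ℝ, 0 ≤ t → t ≤ 1 → y + t • w ∈ G

variable {G : Set (Ed d)} {x0 w0 : Ed d} {δ r : ℝ}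

lemma ChartD.norm_le (_hc : ChartD G x0 δ w0 r) {w : Ed d} (hw : w ∈ ball w0 r) : ‖w‖ ≤ ‖w0‖ + r := by
  have h1 : ‖w - w0‖ < r := by simpa [dist_eq_norm] using hw
  have h2 : ‖w‖ ≤ ‖w0‖ + ‖w - w0‖ := by
    simpa using norm_add_le w0 (w - w0)
  linarith

lemma ChartD.smul_le (hc : ChartD G x0 δ w0 r) {w : Ed d} (hw : w ∈ ball w0 r) {t : ℝ}
    (ht0 : 0 ≤ t) (ht1 : t ≤ 1) : ‖t • w‖ ≤ δ / 8 := by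
  rw [norm_smul, Real.norm_of_nonneg ht0]
  have := hc.norm_le hw
  have h3 := hc.hsmall
  nlinarith [norm_nonneg w]

lemma mem_ball_shift {x0 y a : Ed d} {δ ε : ℝ} (hy : y ∈ ball x0 δ) (ha : ‖a‖ ≤ ε) :
    y + a ∈ ball x0 (δ + ε) := by
  rw [mem_ball, dist_eq_norm] at *
  have : y + a - x0 = (y - x0) + a := by abel
  rw [this]
  linarith [norm_add_le (y - x0) a]

/-- `h` times continuous is integrable. -/
lemma ind_mul_int (hGo : IsOpen G) (hG : Bornology.IsBounded G) {q F : Ed d → ℝ}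
    (hq : Continuous q) (hF : Continuous F) : Integrable fun y => G.indicator q y * F y := by
  have h1 := (cont_integrableOn hG (hq.mul hF)).integrable_indicator hGo.measurableSet
  refine h1.congr (Eventually.of_forall fun y => ?_)
  by_cases hy : y ∈ G <;> simp [hy]

lemma ind_mul_int' (hGo : IsOpen G) (hG : Bornology.IsBounded G) {q F : Ed d → ℝ}
    (hq : Continuous q) (hF : Continuous F) (a : Ed d) :
    Integrable fun y => G.indicator q (y - a) * F y := by
  have h1 := (ind_mul_int hGo hG hq (F := fun y => F (y + a)) (by fun_prop)).comp_sub_right a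
  simpa using h1

lemma ind_memLp (hGo : IsOpen G) (hG : Bornology.IsBounded G) {q : Ed d → ℝ}
    (hq : Continuous q) : MemLp (G.indicator q) 2 volume := by
  rw [memLp_two_iff_integrable_sq (hq.aestronglyMeasurable.indicator hGo.measurableSet)]
  have h1 := (cont_integrableOn hG (hq.pow 2)).integrable_indicator hGo.measurableSet
  refine h1.congr (Eventually.of_forall fun y => ?_)
  by_cases hy : y ∈ G <;> simp [hy]

lemma ind_sq (hGo : IsOpen G) {q : Ed d → ℝ} :
    ∫ y, G.indicator q y ^ 2 = ∫ y in G, q y ^ 2 := by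
  rw [← integral_indicator hGo.measurableSet]
  congr 1
  ext y
  by_cases hy : y ∈ G <;> simp [hy]

lemma HD_eq (hGo : IsOpen G) (q f : Ed d → ℝ) (v : Ed d) :
    HD G q f v = ∫ y, G.indicator q y * f (y + v) := by
  unfold HD
  rw [← integral_indicator hGo.measurableSet]
  congr 1
  ext y
  by_cases hy : y ∈ G <;> simp [hy]

lemma HD_eq' (hGo : IsOpen G) (q f : Ed d → ℝ) (a v : Ed d) :
    HD G q f (a + v) = ∫ y, G.indicator q (y - a) * f (y + v) := by
  rw [HD_eq hGo, ← integral_sub_right_eq_self _ a]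
  congr 1
  ext y
  congr 2
  abel

lemma dd_eq (hGo : IsOpen G) (hG : Bornology.IsBounded G) {q f : Ed d → ℝ}
    (hq : Continuous q) (hf : Continuous f) (s t' t : ℝ) (z w : Ed d) :
    ddD (HD G q f) s t' t (z, w) = ∫ y, (G.indicator q (y - s • z) - G.indicator q y) *
      (f (y + t' • w) - f (y + t • w)) := by
  unfold ddD
  simp only
  rw [HD_eq' hGo, HD_eq' hGo, HD_eq hGo, HD_eq hGo]
  have i1 := ind_mul_int' hGo hG hq (F := fun y => f (y + t' • w)) (by fun_prop) (s • z)
  have i2 := ind_mul_int' hGo hG hq (F := fun y => f (y + t • w)) (by fun_prop) (s • z)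
  have i3 := ind_mul_int hGo hG hq (F := fun y => f (y + t' • w)) (by fun_prop)
  have i4 := ind_mul_int hGo hG hq (F := fun y => f (y + t • w)) (by fun_prop)
  have e1 := integral_add ((i1.sub i2).sub i3) i4
  have e2 := integral_sub (i1.sub i2) i3
  have e3 := integral_sub i1 i2
  simp only [Pi.sub_apply] at e1 e2 e3
  rw [← e3, ← e2, ← e1]
  congr 1
  ext y
  ring

lemma rpow_split {s θ : ℝ} (hs : 0 < s) (A B : ℝ) :
    s⁻¹ * |A * B| ≤ 1 / 2 * (s ^ (-(2 * θ)) * A ^ 2) + 1 / 2 * (s ^ (-(2 * (1 - θ))) * B ^ 2) := by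
  have h1 : s ^ (-(2 * θ)) = (s ^ (-θ)) ^ 2 := by
    rw [← Real.rpow_natCast, ← Real.rpow_mul hs.le]; congr 1; push_cast; ring
  have h2 : s ^ (-(2 * (1 - θ))) = (s ^ (-(1 - θ))) ^ 2 := by
    rw [← Real.rpow_natCast, ← Real.rpow_mul hs.le]; congr 1; push_cast; ring
  have h3 : s⁻¹ = s ^ (-θ) * s ^ (-(1 - θ)) := by
    rw [← Real.rpow_add hs, ← Real.rpow_neg_one]; congr 1; ring
  rw [h1, h2, h3, abs_mul, ← sq_abs A, ← sq_abs B]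
  nlinarith [sq_nonneg (s ^ (-θ) * |A| - s ^ (-(1 - θ)) * |B|)]

lemma osc_int (hGo : IsOpen G) (hG : Bornology.IsBounded G) {f : Ed d → ℝ} (hf : Continuous f)
    (a : Ed d) : Integrable ({y | y ∈ G ∧ y + a ∈ G}.indicator fun y => (f (y + a) - f y) ^ 2) :=
  ((cont_integrableOn hG (by fun_prop : Continuous fun y => (f (y + a) - f y) ^ 2)).mono_set
    (fun _ hy => hy.1)).integrable_indicator (osc_set_meas hGo a)

lemma oscD_eq (hGo : IsOpen G) (f : Ed d → ℝ) (a : Ed d) :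
    oscD G f a = ∫ y, {y | y ∈ G ∧ y + a ∈ G}.indicator (fun y => (f (y + a) - f y) ^ 2) y := by
  unfold oscD
  rw [integral_indicator (osc_set_meas hGo a)]

lemma dd_bound (hGo : IsOpen G) (hG : Bornology.IsBounded G) (hc : ChartD G x0 δ w0 r)
    {q f : Ed d → ℝ} (hq : Continuous q) (hqs : ∀ y, q y ≠ 0 → y ∈ closedBall x0 (δ / 2))
    (hf : Continuous f) {s t' t : ℝ} (hs0 : 0 < s) (hs1 : s ≤ 1) (ht0' : 0 ≤ t') (ht1' : t' ≤ 1)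
    (ht0 : 0 ≤ t) (ht1 : t ≤ 1) {z w : Ed d} (hz : z ∈ ball w0 r) (hw : w ∈ ball w0 r) (θ : ℝ) :
    s⁻¹ * |ddD (HD G q f) s t' t (z, w)| ≤
      1 / 2 * (s ^ (-(2 * θ)) * ∫ y, (G.indicator q (y - s • z) - G.indicator q y) ^ 2) +
      s ^ (-(2 * (1 - θ))) * (oscD G f (t' • w) + oscD G f (t • w)) := by
  have hm := ind_memLp hGo hG hq
  have iA : Integrable fun y => (G.indicator q (y - s • z) - G.indicator q y) ^ 2 :=
    ((memLp_shift' hm (s • z)).sub hm).integrable_sq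
  have iB := osc_int hGo hG hf (t' • w)
  have iC := osc_int hGo hG hf (t • w)
  have key : ∀ y, s⁻¹ * |(G.indicator q (y - s • z) - G.indicator q y) *
      (f (y + t' • w) - f (y + t • w))| ≤
      1 / 2 * (s ^ (-(2 * θ)) * (G.indicator q (y - s • z) - G.indicator q y) ^ 2) +
      s ^ (-(2 * (1 - θ))) *
        ({y | y ∈ G ∧ y + t' • w ∈ G}.indicator (fun y => (f (y + t' • w) - f y) ^ 2) y +
        {y | y ∈ G ∧ y + t • w ∈ G}.indicator (fun y => (f (y + t • w) - f y) ^ 2) y) := by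
    intro y
    have hp : 0 < s ^ (-(2 * (1 - θ))) := Real.rpow_pos_of_pos hs0 _
    by_cases hA : G.indicator q (y - s • z) - G.indicator q y = 0
    · rw [hA]
      simp only [zero_mul, abs_zero, mul_zero, ne_eq, OfNat.ofNat_ne_zero, not_false_eq_true,
        zero_pow, zero_add]
      exact mul_nonneg hp.le (add_nonneg (indicator_nonneg (fun _ _ => sq_nonneg _) _)
        (indicator_nonneg (fun _ _ => sq_nonneg _) _))
    · have hδ := hc.hδ
      have hy : y ∈ G ∧ y ∈ ball x0 δ := by
        by_cases h0 : G.indicator q y = 0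
        · have h1 : G.indicator q (y - s • z) ≠ 0 := fun h => hA (by rw [h, h0, sub_zero])
          have h2 : y - s • z ∈ G := by
            by_contra hn; exact h1 (indicator_of_notMem hn _)
          have h3 : y - s • z ∈ closedBall x0 (δ / 2) := by
            apply hqs; rwa [indicator_of_mem h2] at h1
          have h4 : y - s • z ∈ ball x0 (δ * 3 / 4) := closedBall_subset_ball (by linarith) h3
          constructor
          · have := hc.hP _ h2 (ball_subset_ball (by linarith) h4) z hz s hs0.le hs1
            simpa using this
          · have := mem_ball_shift h4 (hc.smul_le hz hs0.le hs1)
            rw [sub_add_cancel] at this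
            exact ball_subset_ball (by linarith) this
        · have h2 : y ∈ G := by
            by_contra hn; exact h0 (indicator_of_notMem hn _)
          refine ⟨h2, ?_⟩
          have h3 : y ∈ closedBall x0 (δ / 2) := by
            apply hqs; rwa [indicator_of_mem h2] at h0
          exact closedBall_subset_ball (by linarith) h3
      have m1 : y ∈ {y | y ∈ G ∧ y + t' • w ∈ G} := ⟨hy.1, hc.hP y hy.1 hy.2 w hw t' ht0' ht1'⟩
      have m2 : y ∈ {y | y ∈ G ∧ y + t • w ∈ G} := ⟨hy.1, hc.hP y hy.1 hy.2 w hw t ht0 ht1⟩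
      rw [indicator_of_mem m1, indicator_of_mem m2]
      refine (rpow_split (θ := θ) hs0 _ _).trans ?_
      have : (f (y + t' • w) - f (y + t • w)) ^ 2 ≤
          2 * ((f (y + t' • w) - f y) ^ 2 + (f (y + t • w) - f y) ^ 2) := by
        nlinarith [sq_nonneg ((f (y + t' • w) - f y) + (f (y + t • w) - f y))]
      nlinarith
  rw [dd_eq hGo hG hq hf, oscD_eq hGo, oscD_eq hGo]
  have iAB : Integrable fun y => (G.indicator q (y - s • z) - G.indicator q y) *
      (f (y + t' • w) - f (y + t • w)) := by
    have i1 := ind_mul_int' hGo hG hq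
      (F := fun y => f (y + t' • w) - f (y + t • w)) (by fun_prop) (s • z)
    have i2 := ind_mul_int hGo hG hq (F := fun y => f (y + t' • w) - f (y + t • w)) (by fun_prop)
    refine (i1.sub i2).congr (Eventually.of_forall fun y => ?_)
    simp only [Pi.sub_apply]
    ring
  calc s⁻¹ * |∫ y, (G.indicator q (y - s • z) - G.indicator q y) *
        (f (y + t' • w) - f (y + t • w))|
      ≤ s⁻¹ * ∫ y, |(G.indicator q (y - s • z) - G.indicator q y) *
        (f (y + t' • w) - f (y + t • w))| :=
        mul_le_mul_of_nonneg_left abs_integral_le_integral_abs (by positivity)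
    _ = ∫ y, s⁻¹ * |(G.indicator q (y - s • z) - G.indicator q y) *
        (f (y + t' • w) - f (y + t • w))| := by rw [integral_const_mul]
    _ ≤ _ := integral_mono (iAB.abs.const_mul _)
        (((iA.const_mul _).const_mul _).add ((iB.add iC).const_mul _)) key
    _ = _ := by
        have e1 := integral_add ((iA.const_mul (s ^ (-(2 * θ)))).const_mul (1 / 2))
          ((iB.add iC).const_mul (s ^ (-(2 * (1 - θ)))))
        have e2 := integral_add iB iC
        simp only [Pi.add_apply] at e1 e2 ⊢
        rw [e1, integral_const_mul, integral_const_mul, integral_const_mul, e2]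

lemma HD_bound (hGo : IsOpen G) (hG : Bornology.IsBounded G) (hc : ChartD G x0 δ w0 r)
    {q f : Ed d → ℝ} (hq : Continuous q) (hqs : ∀ y, q y ≠ 0 → y ∈ closedBall x0 (δ / 2))
    (hf : Continuous f) {z w : Ed d} (hz : z ∈ ball w0 r) (hw : w ∈ ball w0 r) :
    |HD G q f (z + w)| ≤ (∫ y, G.indicator q y ^ 2) + ∫ y in G, f y ^ 2 := by
  have hm := ind_memLp hGo hG hq
  have i1 := hm.integrable_sq
  have i2 : Integrable (G.indicator fun y => f y ^ 2) :=
    (cont_integrableOn hG (hf.pow 2)).integrable_indicator hGo.measurableSet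
  have i3 := i2.comp_add_right (z + w)
  have hδ := hc.hδ
  rw [HD_eq hGo, ← integral_indicator hGo.measurableSet,
    ← integral_add_right_eq_self (G.indicator fun y => f y ^ 2) (z + w)]
  refine abs_integral_le_integral_abs.trans ?_
  rw [← integral_add i1 i3]
  refine integral_mono (ind_mul_int hGo hG hq (by fun_prop)).abs (i1.add i3) fun y => ?_
  simp only
  by_cases h0 : G.indicator q y = 0
  · rw [h0]
    simp only [zero_mul, abs_zero, ne_eq, OfNat.ofNat_ne_zero, not_false_eq_true,
        zero_pow, zero_add]
    exact indicator_nonneg (fun _ _ => sq_nonneg _) _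
  · have h2 : y ∈ G := by
      by_contra hn; exact h0 (indicator_of_notMem hn _)
    have h3 : y ∈ closedBall x0 (δ / 2) := by
      apply hqs; rwa [indicator_of_mem h2] at h0
    have h4 : y ∈ ball x0 (δ * 3 / 4) := closedBall_subset_ball (by linarith) h3
    have h5 := hc.hP _ h2 (ball_subset_ball (by linarith) h4) z hz 1 zero_le_one le_rfl
    have h6 := mem_ball_shift h4 (hc.smul_le hz zero_le_one le_rfl)
    have h7 := hc.hP _ h5 (ball_subset_ball (by linarith) h6) w hw 1 zero_le_one le_rfl
    rw [one_smul, one_smul, add_assoc] at h7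
    rw [indicator_of_mem h7, abs_mul, ← sq_abs (G.indicator q y), ← sq_abs (f _)]
    nlinarith [sq_nonneg (|G.indicator q y| - |f (y + (z + w))|), sq_nonneg (|G.indicator q y|),
      sq_nonneg (|f (y + (z + w))|)]

end chart

section chart2

variable {d : ℕ} {G : Set (Ed d)} {x0 w0 : Ed d} {δ r : ℝ}

lemma half_rpow_le {θ : ℝ} (hθ0 : 0 < θ) (k : ℕ) :
    ((1 / 2 : ℝ) ^ (k + 1)) ^ (-(2 * (1 - θ))) ≤ 4 * ((1 / 2 : ℝ) ^ k) ^ (-(2 * (1 - θ))) := by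
  have hp : (0 : ℝ) < (1 / 2 : ℝ) ^ k := by positivity
  rw [pow_succ, Real.mul_rpow hp.le (by norm_num), mul_comm]
  refine mul_le_mul_of_nonneg_right ?_ (by positivity)
  rw [Real.rpow_neg (by norm_num), ← Real.inv_rpow (by norm_num)]
  norm_num
  calc (2 : ℝ) ^ (2 * (1 - θ)) ≤ 2 ^ (2 : ℝ) :=
        Real.rpow_le_rpow_of_exponent_le (by norm_num) (by linarith)
    _ = 4 := by norm_num

lemma half_rpow_mono {θ : ℝ} (hθ1 : θ < 1) (k : ℕ) :
    ((1 / 2 : ℝ) ^ k) ^ (-(2 * (1 - θ))) ≤ ((1 / 2 : ℝ) ^ (k + 1)) ^ (-(2 * (1 - θ))) := by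
  refine Real.rpow_le_rpow_of_nonpos (by positivity) ?_ (by linarith)
  rw [pow_succ]
  have hp : (0 : ℝ) < (1 / 2 : ℝ) ^ k := by positivity
  linarith

lemma JD_bound (hGo : IsOpen G) (hG : Bornology.IsBounded G) (hc : ChartD G x0 δ w0 r)
    {q f : Ed d → ℝ} (hq : Continuous q) (hqs : ∀ y, q y ≠ 0 → y ∈ closedBall x0 (δ / 2))
    (hf : Continuous f) {z w : Ed d} (hz : z ∈ ball w0 r) (hw : w ∈ ball w0 r) {θ : ℝ}
    (hθ0 : 0 < θ) (hθ : θ < 1 / 2) (n : ℕ) :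
    |JD (HD G q f) n (z, w)| ≤ (∫ y, G.indicator q y ^ 2) + (∫ y in G, f y ^ 2) +
      ∑ k ∈ Finset.range (n + 1), ((1 / 2 : ℝ) ^ k) ^ (-(2 * θ)) *
          (∫ y, (G.indicator q (y - (1 / 2 : ℝ) ^ k • z) - G.indicator q y) ^ 2) +
      7 * ∑ k ∈ Finset.range (n + 1), ((1 / 2 : ℝ) ^ k) ^ (-(2 * (1 - θ))) *
          oscD G f ((1 / 2 : ℝ) ^ k • w) := by
  set E := (∫ y, G.indicator q y ^ 2) + (∫ y in G, f y ^ 2) with hE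
  set a : ℕ → ℝ := fun k => ((1 / 2 : ℝ) ^ k) ^ (-(2 * θ)) *
          ∫ y, (G.indicator q (y - (1 / 2 : ℝ) ^ k • z) - G.indicator q y) ^ 2 with ha
  set b : ℕ → ℝ := fun k => ((1 / 2 : ℝ) ^ k) ^ (-(2 * (1 - θ))) *
          oscD G f ((1 / 2 : ℝ) ^ k • w) with hb
  have ha0 : ∀ k, 0 ≤ a k := fun k =>
    mul_nonneg (by positivity) (integral_nonneg fun _ => sq_nonneg _)
  have hb0 : ∀ k, 0 ≤ b k := fun k => mul_nonneg (by positivity) (oscD_nonneg _ _ _)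
  have hinv : ∀ n, |JD (HD G q f) n (z, w)| ≤ E + ∑ k ∈ Finset.range n, (a k + 7 * b k) +
      (1 / 2 * a n + 2 * b n) := by
    intro n
    induction n with
    | zero =>
      have := HD_bound hGo hG hc hq hqs hf hz hw
      simp only [JD, abs_neg, Finset.range_zero, Finset.sum_empty]
      have h1 := ha0 0
      have h2 := hb0 0
      linarith
    | succ k ih =>
      rw [Finset.sum_range_succ]
      simp only [JD]
      have ht : (0 : ℝ) < (1 / 2 : ℝ) ^ k := by positivity
      have ht' : (0 : ℝ) < (1 / 2 : ℝ) ^ (k + 1) := by positivity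
      have ht1 : (1 / 2 : ℝ) ^ k ≤ 1 := pow_le_one₀ (by norm_num) (by norm_num)
      have ht1' : (1 / 2 : ℝ) ^ (k + 1) ≤ 1 := pow_le_one₀ (by norm_num) (by norm_num)
      have d1 := dd_bound hGo hG hc hq hqs hf ht' ht1' ht'.le ht1' ht.le ht1 hz hw θ
      have d2 := dd_bound hGo hG hc hq hqs hf ht ht1 ht'.le ht1' ht.le ht1 hz hw θ
      have m1 := mul_le_mul_of_nonneg_right (half_rpow_le hθ0 k)
        (oscD_nonneg G f ((1 / 2 : ℝ) ^ k • w))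
      have m2 := mul_le_mul_of_nonneg_right (half_rpow_mono (by linarith : θ < 1) k)
        (oscD_nonneg G f ((1 / 2 : ℝ) ^ (k + 1) • w))
      have n1 : ∀ (X Y c e : ℝ), 0 ≤ c → 0 ≤ e → ∀ J, |J + (-c * X + -e * Y)| ≤
          |J| + (c * |X| + e * |Y|) := by
        intro X Y c e hc he J
        refine (abs_add_le _ _).trans ?_
        gcongr
        refine (abs_add_le _ _).trans ?_
        rw [abs_mul, abs_mul, abs_neg, abs_neg, abs_of_nonneg hc, abs_of_nonneg he]
      refine (n1 _ _ _ _ (inv_nonneg.2 ht'.le) (inv_nonneg.2 ht.le) _).trans ?_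
      simp only [ha, hb] at ih ⊢
      rw [mul_add] at d1 d2
      linarith
  refine (hinv n).trans ?_
  have h1 := ha0 n
  have h2 := hb0 n
  rw [Finset.sum_range_succ, Finset.sum_range_succ, Finset.sum_add_distrib, ← Finset.mul_sum]
  linarith

lemma osc_prod (hGo : IsOpen G) (hG : Bornology.IsBounded G) {χ g : Ed d → ℝ} {K Λ : ℝ}
    (hχ : Continuous χ) (hg : Continuous g) (hK : ∀ y, |χ y| ≤ K)
    (hΛ : ∀ x y, |χ x - χ y| ≤ Λ * ‖x - y‖) (a : Ed d) :
    oscD G (G.indicator fun y => χ y * g y) a ≤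
      2 * K ^ 2 * oscD G g a + 2 * Λ ^ 2 * ‖a‖ ^ 2 * ∫ y in G, g y ^ 2 := by
  have iB := osc_int hGo hG hg a
  have iC := osc_int hGo hG (hχ.mul hg) a
  have iG : Integrable (G.indicator fun y => g y ^ 2) :=
    (cont_integrableOn hG (hg.pow 2)).integrable_indicator hGo.measurableSet
  rw [← integral_indicator hGo.measurableSet, oscD_eq hGo, oscD_eq hGo, ← integral_const_mul,
    ← integral_const_mul]
  have e1 := integral_add (iB.const_mul (2 * K ^ 2)) (iG.const_mul (2 * Λ ^ 2 * ‖a‖ ^ 2))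
  rw [← e1]
  have e2 : ∀ y, {y | y ∈ G ∧ y + a ∈ G}.indicator (fun y =>
      (G.indicator (fun y => χ y * g y) (y + a) - G.indicator (fun y => χ y * g y) y) ^ 2) y =
      {y | y ∈ G ∧ y + a ∈ G}.indicator (fun y => (χ (y + a) * g (y + a) - χ y * g y) ^ 2) y := by
    intro y
    by_cases hy : y ∈ {y | y ∈ G ∧ y + a ∈ G}
    · rw [indicator_of_mem hy, indicator_of_mem hy, indicator_of_mem hy.1, indicator_of_mem hy.2]
    · rw [indicator_of_notMem hy, indicator_of_notMem hy]
  simp_rw [e2]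
  refine integral_mono iC ((iB.const_mul _).add (iG.const_mul _)) fun y => ?_
  simp only
  by_cases hy : y ∈ {y | y ∈ G ∧ y + a ∈ G}
  · rw [indicator_of_mem hy, indicator_of_mem hy, indicator_of_mem hy.1]
    have h1 := hK (y + a)
    have h2 := hΛ (y + a) y
    rw [add_sub_cancel_left] at h2
    have h3 : χ (y + a) ^ 2 ≤ K ^ 2 := sq_le_sq' (by linarith [neg_abs_le (χ (y + a))])
      (by linarith [le_abs_self (χ (y + a))])
    have h4 : (χ (y + a) - χ y) ^ 2 ≤ (Λ * ‖a‖) ^ 2 :=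
      sq_le_sq' (by linarith [neg_abs_le (χ (y + a) - χ y)])
      (by linarith [le_abs_self (χ (y + a) - χ y)])
    have h5 : (χ (y + a) * g (y + a) - χ y * g y) ^ 2 ≤
        2 * (χ (y + a) ^ 2 * (g (y + a) - g y) ^ 2) + 2 * ((χ (y + a) - χ y) ^ 2 * g y ^ 2) := by
      nlinarith [sq_nonneg (χ (y + a) * (g (y + a) - g y) - (χ (y + a) - χ y) * g y)]
    have h6 := mul_le_mul_of_nonneg_right h3 (sq_nonneg (g (y + a) - g y))
    have h7 := mul_le_mul_of_nonneg_right h4 (sq_nonneg (g y))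
    rw [mul_pow] at h7
    linarith
  · rw [indicator_of_notMem hy, indicator_of_notMem hy]
    have : 0 ≤ G.indicator (fun y => g y ^ 2) y := indicator_nonneg (fun _ _ => sq_nonneg _) _
    positivity

lemma geom_rpow {θ : ℝ} (hθ : θ < 1 / 2) (n : ℕ) :
    ∑ k ∈ Finset.range n, ((1 / 2 : ℝ) ^ k) ^ (-(2 * θ)) * ((1 / 2 : ℝ) ^ k) ^ 2 ≤ 2 := by
  calc _ ≤ ∑ k ∈ Finset.range n, (1 / 2 : ℝ) ^ k := by
        refine Finset.sum_le_sum fun k _ => ?_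
        have hp : (0 : ℝ) < (1 / 2 : ℝ) ^ k := by positivity
        have h1 : (1 / 2 : ℝ) ^ k ≤ 1 := pow_le_one₀ (by norm_num) (by norm_num)
        rw [← Real.rpow_natCast ((1 / 2 : ℝ) ^ k) 2, ← Real.rpow_add hp]
        calc _ ≤ ((1 / 2 : ℝ) ^ k) ^ (1 : ℝ) :=
              Real.rpow_le_rpow_of_exponent_ge hp h1 (by push_cast; linarith)
          _ = _ := Real.rpow_one _
    _ ≤ ∑' k : ℕ, (1 / 2 : ℝ) ^ k :=
        Summable.sum_le_tsum _ (fun _ _ => by positivity) summable_geometric_two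
    _ = 2 := tsum_geometric_two

/-- Pointwise bound of the accumulated kernel, final form. -/
lemma JD_final (hGo : IsOpen G) (hG : Bornology.IsBounded G) (hc : ChartD G x0 δ w0 r)
    {χ : Ed d → ℝ} {K Λ : ℝ} (hχ : Continuous χ) (hK : ∀ y, |χ y| ≤ K)
    (hΛ : ∀ x y, |χ x - χ y| ≤ Λ * ‖x - y‖)
    (hχs : ∀ y, χ y ≠ 0 → y ∈ closedBall x0 (δ / 2)) {θ : ℝ} (hθ0 : 0 < θ) (hθ : θ < 1 / 2) :
    ∃ C : ℝ, 0 < C ∧ ∀ f g : Ed d → ℝ, Continuous f → Continuous g → ∀ z ∈ ball w0 r,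
      ∀ w ∈ ball w0 r, ∀ n,
      |JD (HD G (fun y => χ y * g y) f) n (z, w)| ≤ C * ((∫ y in G, f y ^ 2) + (∫ y in G, g y ^ 2) +
        ∑ k ∈ Finset.range (n + 1), ((1 / 2 : ℝ) ^ k) ^ (-(2 * θ)) * oscD G g ((1 / 2 : ℝ) ^ k • z) +
        ∑ k ∈ Finset.range (n + 1), ((1 / 2 : ℝ) ^ k) ^ (-(2 * (1 - θ))) *
          oscD G f ((1 / 2 : ℝ) ^ k • w)) := by
  obtain ⟨C1, hC1, hardy⟩ := hardy_sum hθ0.le hθ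
  set W := ‖w0‖ + r with hW
  refine ⟨8 + K ^ 2 + C1 * K ^ 2 + C1 * (2 * K ^ 2) + C1 * (4 * Λ ^ 2 * W ^ 2), by positivity, ?_⟩
  intro f g hf hg z hz w hw n
  have hδ := hc.hδ
  have hq : Continuous fun y => χ y * g y := hχ.mul hg
  have hqs : ∀ y, χ y * g y ≠ 0 → y ∈ closedBall x0 (δ / 2) := fun y hy => hχs y (left_ne_zero_of_mul hy)
  have b1 := JD_bound hGo hG hc hq hqs hf hz hw hθ0 hθ n
  set h := G.indicator fun y => χ y * g y with hh
  have hhG : ∀ y, h y ≠ 0 → y ∈ G := by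
    intro y hy; by_contra hn; exact hy (indicator_of_notMem hn _)
  have hhB : ∀ y, h y ≠ 0 → y ∈ ball x0 (δ * 3 / 4) := by
    intro y hy
    have := hhG y hy
    rw [hh, indicator_of_mem this] at hy
    exact closedBall_subset_ball (by linarith) (hqs y hy)
  have b2 := hardy d G h z hGo (ind_memLp hGo hG hq) hhG
    (fun y hy t h0 h1 => hc.hP y (hhG y hy) (ball_subset_ball (by linarith) (hhB y hy)) z hz t h0 h1)
    (fun y hy t h0 h1 hm => by
      have h2 : ‖-((2 : ℝ) • (t • z))‖ ≤ δ / 8 := by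
        rw [norm_neg, smul_smul]; exact hc.smul_le hz (by linarith) (by linarith)
      have h3 := mem_ball_shift (hhB y hy) h2
      rw [← sub_eq_add_neg] at h3
      have h4 := hc.hP _ hm (ball_subset_ball (by linarith) h3) z hz t h0 (by linarith)
      have h5 : y - (2 : ℝ) • (t • z) + t • z = y - t • z := by rw [two_smul]; abel
      rwa [h5] at h4) (n + 1)
  have b3 : ∫ y, h y ^ 2 ≤ K ^ 2 * ∫ y in G, g y ^ 2 := by
    rw [hh, ind_sq hGo, ← integral_const_mul]
    refine integral_mono (cont_integrableOn hG (hq.pow 2))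
      (cont_integrableOn hG (by fun_prop)) fun y => ?_
    simp only [mul_pow]
    refine mul_le_mul_of_nonneg_right ?_ (sq_nonneg _)
    rw [← sq_abs]
    exact pow_le_pow_left₀ (abs_nonneg _) (hK y) 2
  set F2 := ∫ y in G, f y ^ 2
  set G2 := ∫ y in G, g y ^ 2
  set H2 := ∫ y, h y ^ 2
  have hF2 : 0 ≤ F2 := integral_nonneg fun _ => sq_nonneg _
  have hG2 : 0 ≤ G2 := integral_nonneg fun _ => sq_nonneg _
  set SG := ∑ k ∈ Finset.range (n + 1), ((1 / 2 : ℝ) ^ k) ^ (-(2 * θ)) * oscD G g ((1 / 2 : ℝ) ^ k • z)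
  have hSG : 0 ≤ SG := Finset.sum_nonneg fun k _ => mul_nonneg (by positivity) (oscD_nonneg _ _ _)
  set SF := ∑ k ∈ Finset.range (n + 1), ((1 / 2 : ℝ) ^ k) ^ (-(2 * (1 - θ))) *
          oscD G f ((1 / 2 : ℝ) ^ k • w)
  have hSF : 0 ≤ SF := Finset.sum_nonneg fun k _ => mul_nonneg (by positivity) (oscD_nonneg _ _ _)
  have b4 : ∑ k ∈ Finset.range (n + 1), ((1 / 2 : ℝ) ^ k) ^ (-(2 * θ)) * oscD G h ((1 / 2 : ℝ) ^ k • z)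
      ≤ 2 * K ^ 2 * SG + 4 * Λ ^ 2 * W ^ 2 * G2 := by
    have hzW : ‖z‖ ^ 2 ≤ W ^ 2 := pow_le_pow_left₀ (norm_nonneg _) (hc.norm_le hz) 2
    calc _ ≤ ∑ k ∈ Finset.range (n + 1), (2 * K ^ 2 * (((1 / 2 : ℝ) ^ k) ^ (-(2 * θ)) *
          oscD G g ((1 / 2 : ℝ) ^ k • z)) + 2 * Λ ^ 2 * W ^ 2 * G2 *
            (((1 / 2 : ℝ) ^ k) ^ (-(2 * θ)) * ((1 / 2 : ℝ) ^ k) ^ 2)) := by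
          refine Finset.sum_le_sum fun k _ => ?_
          have o := osc_prod hGo hG hχ hg hK hΛ ((1 / 2 : ℝ) ^ k • z)
          have hp : (0 : ℝ) < (1 / 2 : ℝ) ^ k := by positivity
          rw [norm_smul, Real.norm_of_nonneg hp.le, mul_pow] at o
          have o2 : 2 * Λ ^ 2 * ((((1 / 2 : ℝ) ^ k) ^ 2) * ‖z‖ ^ 2) * G2 ≤
              2 * Λ ^ 2 * ((((1 / 2 : ℝ) ^ k) ^ 2) * W ^ 2) * G2 := by gcongr
          have o3 := mul_le_mul_of_nonneg_left (o.trans (add_le_add_right o2 _))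
            (Real.rpow_nonneg hp.le (-(2 * θ)))
          refine o3.trans (le_of_eq ?_)
          ring
      _ = 2 * K ^ 2 * SG + 2 * Λ ^ 2 * W ^ 2 * G2 * ∑ k ∈ Finset.range (n + 1),
            (((1 / 2 : ℝ) ^ k) ^ (-(2 * θ)) * ((1 / 2 : ℝ) ^ k) ^ 2) := by
          rw [Finset.sum_add_distrib, ← Finset.mul_sum, ← Finset.mul_sum]
      _ ≤ 2 * K ^ 2 * SG + 2 * Λ ^ 2 * W ^ 2 * G2 * 2 := by
          have := geom_rpow hθ (n + 1)
          gcongr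
      _ = _ := by ring
  have b5 := b1.trans (add_le_add_left (add_le_add_right b2 _) _)
  have b6 : C1 * (H2 + ∑ k ∈ Finset.range (n + 1), ((1 / 2 : ℝ) ^ k) ^ (-(2 * θ)) * oscD G h ((1 / 2 : ℝ) ^ k • z))
      ≤ C1 * (K ^ 2 * G2 + (2 * K ^ 2 * SG + 4 * Λ ^ 2 * W ^ 2 * G2)) := by gcongr
  have p1 : 0 ≤ K ^ 2 := sq_nonneg _
  have p2 : 0 ≤ C1 * K ^ 2 := by positivity
  have p3 : 0 ≤ C1 * (4 * Λ ^ 2 * W ^ 2) := by positivity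
  have q1 := mul_nonneg p1 hF2
  have q2 := mul_nonneg p1 hSG
  have q3 := mul_nonneg p1 hSF
  have q4 := mul_nonneg p2 hF2
  have q5 := mul_nonneg p2 hG2
  have q6 := mul_nonneg p2 hSG
  have q7 := mul_nonneg p2 hSF
  have q8 := mul_nonneg p3 hF2
  have q9 := mul_nonneg p3 hSG
  have q10 := mul_nonneg p3 hSF
  refine b5.trans ?_
  linarith

end chart2

section chart3

variable {d : ℕ} {G : Set (Ed d)} {x0 w0 : Ed d} {δ r : ℝ}

lemma osc_measurable (hGo : IsOpen G) {v : Ed d → ℝ} (hv : Continuous v) :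
    Measurable (oscD G v) := by
  have h1 : oscD G v = fun a => ∫ y, {p : Ed d × Ed d | p.2 ∈ G ∧ p.2 + p.1 ∈ G}.indicator
      (fun p => (v (p.2 + p.1) - v p.2) ^ 2) (a, y) := by
    ext a
    rw [oscD_eq hGo]
    rfl
  rw [h1]
  have ho : IsOpen {p : Ed d × Ed d | p.2 ∈ G ∧ p.2 + p.1 ∈ G} :=
    (hGo.preimage continuous_snd).inter
      (hGo.preimage (by fun_prop : Continuous fun p : Ed d × Ed d => p.2 + p.1))
  have h2 : StronglyMeasurable ({p : Ed d × Ed d | p.2 ∈ G ∧ p.2 + p.1 ∈ G}.indicator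
      (fun p => (v (p.2 + p.1) - v p.2) ^ 2)) :=
    (by fun_prop : Continuous fun p : Ed d × Ed d => (v (p.2 + p.1) - v p.2) ^ 2).stronglyMeasurable.indicator
      ho.measurableSet
  exact h2.integral_prod_right'.measurable

lemma lint_prod_split {α : Type*} [MeasurableSpace α] {ν : Measure α} [SFinite ν] {φ ψ : α → ℝ≥0∞}
    (hφ : Measurable φ) (hψ : Measurable ψ) (c : ℝ≥0∞) :
    ∫⁻ p : α × α, (c + φ p.1 + ψ p.2) ∂(ν.prod ν) =
      c * (ν univ * ν univ) + ν univ * (∫⁻ z, φ z ∂ν) + ν univ * ∫⁻ w, ψ w ∂ν := by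
  rw [lintegral_add_left (by fun_prop), lintegral_add_left (by fun_prop), lintegral_const,
    lintegral_prod _ (by fun_prop), lintegral_prod _ (by fun_prop)]
  simp only [lintegral_const]
  rw [lintegral_mul_const _ hφ, ← univ_prod_univ, Measure.prod_prod, mul_comm (ν univ) (∫⁻ z, φ z ∂ν),
    mul_comm (ν univ) (∫⁻ z, ψ z ∂ν)]

/-- A cut-off for which the estimate holds. -/
def GoodD (θ : ℝ) (G : Set (Ed d)) (χ : Ed d → ℝ) : Prop :=
  ∃ C : ℝ, 0 < C ∧ ∀ (i : Fin d) (f g : Ed d → ℝ),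
      ContDiff ℝ (⊤ : ℕ∞) f → ContDiff ℝ (⊤ : ℕ∞) g →
      |∫ x in G, pdD i f x * (χ x * g x)| ≤ C * (((∫ x in G, f x ^ 2) + gagSqD d (1 - θ) G f) +
        ((∫ x in G, g x ^ 2) + gagSqD d θ G g))

lemma gagSqD_nonneg (s : ℝ) (G : Set (Ed d)) (v : Ed d → ℝ) : 0 ≤ gagSqD d s G v :=
  integral_nonneg fun _ => integral_nonneg fun _ =>
    div_nonneg (sq_nonneg _) (Real.rpow_nonneg dist_nonneg _)

lemma chart_good (hd : 1 ≤ d) (hGo : IsOpen G) (hG : Bornology.IsBounded G)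
    (hc : ChartD G x0 δ w0 r) {χ : Ed d → ℝ} (hχ : ContDiff ℝ (⊤ : ℕ∞) χ)
    (hχs : ∀ y, χ y ≠ 0 → y ∈ closedBall x0 (δ / 2)) {θ : ℝ} (hθ0 : 0 < θ) (hθ : θ < 1 / 2) :
    GoodD θ G χ := by
  have hχc : HasCompactSupport χ := HasCompactSupport.intro (isCompact_closedBall x0 (δ / 2))
    fun y hy => by by_contra hn; exact hy (hχs y hn)
  obtain ⟨K, hK⟩ := hχc.exists_bound_of_continuous hχ.continuous
  obtain ⟨Λ, hΛ⟩ := ContDiff.lipschitzWith_of_hasCompactSupport hχc hχ (by simp)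
  obtain ⟨C, hC, hJ⟩ := JD_final hGo hG hc hχ.continuous (K := K) (Λ := Λ)
    (fun y => by simpa using hK y) (fun x y => by simpa [dist_eq_norm] using hΛ.dist_le_mul x y)
    hχs hθ0 hθ
  have hr := hc.hr
  -- the mollifier
  let b : ContDiffBump w0 := ⟨r / 4, r / 2, by linarith, by linarith⟩
  set ρ : Ed d → ℝ := b.normed volume with hρ
  have hρs : ContDiff ℝ 1 ρ := b.contDiff_normed
  have hρc : HasCompactSupport ρ := b.hasCompactSupport_normed
  have hρ1 : ∫ z, ρ z = 1 := b.integral_normed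
  obtain ⟨R1, hR1⟩ := hρc.exists_bound_of_continuous hρs.continuous
  obtain ⟨R2, hR2⟩ := (hρc.fderiv ℝ).exists_bound_of_continuous (hρs.continuous_fderiv (by simp))
  set R := max R1 R2 with hR
  have hR0 : 0 ≤ R := (norm_nonneg _).trans ((hR1 w0).trans (le_max_left _ _))
  have htsupp : tsupport ρ = closedBall w0 (r / 2) := b.tsupport_normed_eq
  set B := ball w0 r with hBdef
  have hsub : ∀ z, z ∉ B → z ∉ tsupport ρ := fun z hz hz' => hz (by
    rw [htsupp] at hz'
    exact closedBall_subset_ball (by linarith) hz')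
  have hρB : ∀ z, z ∉ B → ρ z = 0 := fun z hz => image_eq_zero_of_notMem_tsupport (hsub z hz)
  have hρB' : ∀ z, z ∉ B → fderiv ℝ ρ z = 0 := fun z hz => by
    by_contra hn
    exact hsub z hz (support_fderiv_subset ℝ hn)
  set V := volume.real B with hV
  set W := ‖w0‖ + r with hW
  have hW0 : 0 < W := by positivity
  set A1 := W ^ ((d : ℝ) + 2 * θ) with hA1
  set A2 := W ^ ((d : ℝ) + 2 * (1 - θ)) with hA2
  refine ⟨R * R * (C * (V * V + V * A1 + V * A2)) + 1, by positivity, ?_⟩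
  intro i f g hf hg
  set F2 := ∫ x in G, f x ^ 2 with hF2
  set G2 := ∫ x in G, g x ^ 2 with hG2
  have hF2n : 0 ≤ F2 := integral_nonneg fun _ => sq_nonneg _
  have hG2n : 0 ≤ G2 := integral_nonneg fun _ => sq_nonneg _
  have hN := gagSqD_nonneg (1 - θ) G f
  have hM := gagSqD_nonneg θ G g
  obtain ⟨hHs, hHd⟩ := HD_contDiff hG (q := fun y => χ y * g y) (f := f)
    (hχ.continuous.mul hg.continuous) (hf.of_le (by simp))
  set e : Ed d := EuclideanSpace.single i 1 with he
  have hVB : volume B = ENNReal.ofReal V := by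
    rw [hV, Measure.real, ENNReal.ofReal_toReal measure_ball_lt_top.ne]
  have key : ∀ n, ∫⁻ p in B ×ˢ B, ENNReal.ofReal |JD (HD G (fun y => χ y * g y) f) n p| ≤
      ENNReal.ofReal (C * ((F2 + G2) * (V * V) + V * (A1 * gagSqD d θ G g) +
        V * (A2 * gagSqD d (1 - θ) G f))) := by
    intro n
    set φ : Ed d → ℝ≥0∞ := fun z => ∑ k ∈ Finset.range (n + 1),
      ENNReal.ofReal (((1 / 2 : ℝ) ^ k) ^ (-(2 * θ)) * oscD G g ((1 / 2 : ℝ) ^ k • z)) with hφ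
    set ψ : Ed d → ℝ≥0∞ := fun w => ∑ k ∈ Finset.range (n + 1),
      ENNReal.ofReal (((1 / 2 : ℝ) ^ k) ^ (-(2 * (1 - θ))) * oscD G f ((1 / 2 : ℝ) ^ k • w)) with hψ
    have mφ : Measurable φ := by
      have := osc_measurable hGo hg.continuous
      fun_prop
    have mψ : Measurable ψ := by
      have := osc_measurable hGo hf.continuous
      fun_prop
    have oφ : ∫⁻ z in B, φ z ≤ ENNReal.ofReal (A1 * gagSqD d θ G g) :=
      osc_sum_le hd hθ0 (by linarith) hGo hG hg w0 hr hc.hrw (n + 1)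
    have oψ : ∫⁻ z in B, ψ z ≤ ENNReal.ofReal (A2 * gagSqD d (1 - θ) G f) :=
      osc_sum_le hd (by linarith) (by linarith) hGo hG hf w0 hr hc.hrw (n + 1)
    have hBm : MeasurableSet B := measurableSet_ball
    calc _ ≤ ∫⁻ p in B ×ˢ B, ENNReal.ofReal C * (ENNReal.ofReal (F2 + G2) + φ p.1 + ψ p.2) := by
          refine setLIntegral_mono' (hBm.prod hBm) fun p hp => ?_
          refine (ENNReal.ofReal_le_ofReal (hJ f g hf.continuous hg.continuous p.1 hp.1 p.2 hp.2 n)).trans ?_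
          rw [ENNReal.ofReal_mul hC.le]
          gcongr
          refine ENNReal.ofReal_add_le.trans ?_
          gcongr ?_ + ?_
          · refine ENNReal.ofReal_add_le.trans ?_
            refine add_le_add le_rfl ?_
            rw [ENNReal.ofReal_sum_of_nonneg]
            exact fun k _ => mul_nonneg (by positivity) (oscD_nonneg _ _ _)
          · rw [ENNReal.ofReal_sum_of_nonneg]
            exact fun k _ => mul_nonneg (by positivity) (oscD_nonneg _ _ _)
      _ = ENNReal.ofReal C * (ENNReal.ofReal (F2 + G2) * (volume B * volume B) +
            volume B * (∫⁻ z in B, φ z) + volume B * ∫⁻ w in B, ψ w) := by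
          rw [lintegral_const_mul' _ _ ENNReal.ofReal_ne_top, Measure.volume_eq_prod,
            ← Measure.prod_restrict, lint_prod_split mφ mψ]
          simp
      _ ≤ ENNReal.ofReal C * (ENNReal.ofReal (F2 + G2) * (volume B * volume B) +
            volume B * ENNReal.ofReal (A1 * gagSqD d θ G g) +
            volume B * ENNReal.ofReal (A2 * gagSqD d (1 - θ) G f)) := by gcongr
      _ = _ := by
          have hV0 : 0 ≤ V := by positivity
          rw [hVB, ← ENNReal.ofReal_mul hV0, ← ENNReal.ofReal_mul (by positivity),
            ← ENNReal.ofReal_mul hV0, ← ENNReal.ofReal_mul hV0, ← ENNReal.ofReal_add (by positivity)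
            (by positivity), ← ENNReal.ofReal_add (by positivity) (by positivity),
            ← ENNReal.ofReal_mul hC.le]
  have kb := kernel_bound hHs hρs hρc hρ1 e measurableSet_ball hR0 hρB
    (fun z hz => by rw [hρB' z hz]; simp)
    (fun z => (by simpa using hR1 z : |ρ z| ≤ R1).trans (le_max_left _ _))
    (fun z => by
      have h1 := (fderiv ℝ ρ z).le_opNorm e
      have h2 : ‖e‖ = 1 := by simp [he]
      rw [h2, mul_one, Real.norm_eq_abs] at h1
      exact (h1.trans (hR2 z)).trans (le_max_right _ _)) key
  rw [← ENNReal.ofReal_mul (by positivity), ENNReal.ofReal_le_ofReal_iff (by positivity), hHd] at kb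
  have e1 : ∫ x in G, pdD i f x * (χ x * g x) = ∫ x in G, χ x * g x * fderiv ℝ f x e := by
    congr 1; ext x; rw [mul_comm]; rfl
  rw [e1]
  refine kb.trans ?_
  set N := gagSqD d (1 - θ) G f
  set M := gagSqD d θ G g
  have hV0 : 0 ≤ V := by positivity
  have hA10 : 0 ≤ A1 := by positivity
  have hA20 : 0 ≤ A2 := by positivity
  have hX : (F2 + G2) * (V * V) + V * (A1 * M) + V * (A2 * N) ≤
      (V * V + V * A1 + V * A2) * ((F2 + N) + (G2 + M)) := by
    have : 0 ≤ V * V * (N + M) + V * A1 * (F2 + G2 + N) + V * A2 * (F2 + G2 + M) := by positivity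
    linarith
  have hY := mul_le_mul_of_nonneg_left hX (by positivity : 0 ≤ R * R * C)
  linarith

end chart3

section exist

variable {d : ℕ} {G : Set (Ed d)}

lemma chart_interior (hd : 1 ≤ d) (hGo : IsOpen G) {x0 : Ed d} (hx : x0 ∈ G) :
    ∃ δ w0 r, ChartD G x0 δ w0 r := by
  obtain ⟨ε, hε, hsub⟩ := Metric.isOpen_iff.1 hGo x0 hx
  set δ := ε / 2 with hδ
  set w0 : Ed d := (δ / 16) • EuclideanSpace.single (⟨0, hd⟩ : Fin d) (1 : ℝ) with hw0
  have hδ0 : 0 < δ := by positivity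
  have hn : ‖w0‖ = δ / 16 := by
    rw [hw0, norm_smul, Real.norm_of_nonneg (by positivity)]; simp
  refine ⟨δ, w0, δ / 48, hδ0, by positivity, by rw [hn]; linarith, by rw [hn]; linarith, ?_⟩
  intro y hy hyb w hw t ht0 ht1
  apply hsub
  have h1 : ‖w - w0‖ < δ / 48 := by simpa [dist_eq_norm] using hw
  have h2 : ‖w‖ ≤ ‖w0‖ + ‖w - w0‖ := by simpa using norm_add_le w0 (w - w0)
  have h3 : ‖t • w‖ ≤ δ := by
    rw [norm_smul, Real.norm_of_nonneg ht0]
    nlinarith [norm_nonneg w]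
  have := mem_ball_shift hyb h3
  exact ball_subset_ball (by linarith) this

lemma chart_frontier (hL : HasLipschitzBoundaryD G) {x0 : Ed d} (hx : x0 ∈ frontier G) :
    ∃ δ w0 r, ChartD G x0 δ w0 r := by
  obtain ⟨ν, L, γ, U, hν, hγ, hU, hxU, hGU⟩ := hL x0 hx
  obtain ⟨ε, hε, hsub⟩ := Metric.isOpen_iff.1 hU x0 hxU
  set δ := ε / 2 with hδ
  have hδ0 : 0 < δ := by positivity
  set c := δ / 16 with hc
  have hc0 : 0 < c := by positivity
  set w0 : Ed d := c • ν with hw0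
  have hn : ‖w0‖ = c := by rw [hw0, norm_smul, Real.norm_of_nonneg hc0.le, hν, mul_one]
  have hL0 : (0 : ℝ) ≤ L := L.2
  set r := c / (3 * (1 + 2 * L)) with hr
  have hr0 : 0 < r := by positivity
  have hrL : 3 * (r * (1 + 2 * L)) = c := by rw [hr]; field_simp
  have hr3 : 3 * r ≤ c := by nlinarith
  refine ⟨δ, w0, r, hδ0, hr0, by rw [hn]; exact hr3, by rw [hn]; linarith, ?_⟩
  intro y hy hyb w hw t ht0 ht1
  set u := w - w0 with hu
  have h1 : ‖u‖ < r := by simpa [dist_eq_norm] using hw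
  have hwu : w = w0 + u := by rw [hu]; abel
  have h2 : ‖w‖ ≤ c + r := by
    rw [hwu]; have := norm_add_le w0 u; linarith
  have h3 : ‖t • w‖ ≤ δ := by
    rw [norm_smul, Real.norm_of_nonneg ht0]
    nlinarith [norm_nonneg w]
  have hzU : y + t • w ∈ U := by
    apply hsub
    exact ball_subset_ball (by linarith) (mem_ball_shift hyb h3)
  have hyU : y ∈ U := hsub (ball_subset_ball (by linarith) hyb)
  have hyD : γ (y - (inner ℝ y ν : ℝ) • ν) < (inner ℝ y ν : ℝ) := by
    have : y ∈ G ∩ U := ⟨hy, hyU⟩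
    rw [hGU] at this
    exact this.2
  have hνν : (inner ℝ ν ν : ℝ) = 1 := by rw [real_inner_self_eq_norm_sq, hν]; norm_num
  have hwν : (inner ℝ w ν : ℝ) = c + inner ℝ u ν := by
    rw [hwu, inner_add_left, hw0, inner_smul_left, hνν]; simp
  have huν : |(inner ℝ u ν : ℝ)| ≤ r := by
    have := abs_real_inner_le_norm u ν
    rw [hν, mul_one] at this
    linarith
  have hzν : (inner ℝ (y + t • w) ν : ℝ) = inner ℝ y ν + t * (c + inner ℝ u ν) := by
    rw [inner_add_left, inner_smul_left, hwν]; simp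
  have hproj : (y + t • w - (inner ℝ (y + t • w) ν : ℝ) • ν) - (y - (inner ℝ y ν : ℝ) • ν)
      = t • (u - (inner ℝ u ν : ℝ) • ν) := by
    rw [hzν, hwu, hw0]
    module
  have hpn : ‖u - (inner ℝ u ν : ℝ) • ν‖ ≤ 2 * r := by
    have h4 := norm_sub_le u ((inner ℝ u ν : ℝ) • ν)
    rw [norm_smul, hν, mul_one, Real.norm_eq_abs] at h4
    linarith
  have hγd : γ (y + t • w - (inner ℝ (y + t • w) ν : ℝ) • ν) - γ (y - (inner ℝ y ν : ℝ) • ν)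
      ≤ L * (t * (2 * r)) := by
    have h5 := hγ.dist_le_mul (y + t • w - (inner ℝ (y + t • w) ν : ℝ) • ν) (y - (inner ℝ y ν : ℝ) • ν)
    rw [Real.dist_eq, dist_eq_norm, hproj, norm_smul, Real.norm_of_nonneg ht0] at h5
    refine (le_abs_self _).trans (h5.trans ?_)
    gcongr
  have hfin : y + t • w ∈ G ∩ U := by
    rw [hGU]
    refine ⟨hzU, ?_⟩
    rw [hzν]
    rw [hzν] at hγd
    have h6 := (abs_le.1 huν).1
    have h7 : 0 ≤ t * (c - r - 2 * L * r) := mul_nonneg ht0 (by nlinarith)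
    have h8 : 0 ≤ t * (inner ℝ u ν + r) := mul_nonneg ht0 (by linarith)
    linarith
  exact hfin.1

lemma chart_exists (hd : 1 ≤ d) (hGo : IsOpen G) (hL : HasLipschitzBoundaryD G) {x0 : Ed d}
    (hx : x0 ∈ closure G) : ∃ δ w0 r, ChartD G x0 δ w0 r := by
  by_cases h : x0 ∈ G
  · exact chart_interior hd hGo h
  · exact chart_frontier hL ⟨hx, by rwa [hGo.interior_eq]⟩

lemma good_add (hG : Bornology.IsBounded G) {θ : ℝ} {χ η : Ed d → ℝ} (hχ : Continuous χ)
    (hη : Continuous η) (h1 : GoodD θ G χ) (h2 : GoodD θ G η) :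
    GoodD θ G fun x => χ x + η x := by
  obtain ⟨C1, hC1, H1⟩ := h1
  obtain ⟨C2, hC2, H2⟩ := h2
  refine ⟨C1 + C2, by positivity, fun i f g hf hg => ?_⟩
  have hp : Continuous (pdD i f) := (hf.continuous_fderiv (by simp)).clm_apply continuous_const
  have hgc := hg.continuous
  have e : ∫ x in G, pdD i f x * ((χ x + η x) * g x) =
      (∫ x in G, pdD i f x * (χ x * g x)) + ∫ x in G, pdD i f x * (η x * g x) := by
    rw [← integral_add (cont_integrableOn hG (by fun_prop)) (cont_integrableOn hG (by fun_prop))]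
    congr 1
    ext x
    ring
  rw [e, add_mul]
  exact (abs_add_le _ _).trans (add_le_add (H1 i f g hf hg) (H2 i f g hf hg))

lemma good_zero (θ : ℝ) : GoodD θ G (fun _ => 0) := by
  refine ⟨1, one_pos, fun i f g _ _ => ?_⟩
  have h1 := gagSqD_nonneg (1 - θ) G f
  have h2 := gagSqD_nonneg θ G g
  have h3 : 0 ≤ ∫ x in G, f x ^ 2 := integral_nonneg fun _ => sq_nonneg _
  have h4 : 0 ≤ ∫ x in G, g x ^ 2 := integral_nonneg fun _ => sq_nonneg _
  simp only [zero_mul, mul_zero, integral_zero, abs_zero]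
  positivity

lemma good_one (hd : 1 ≤ d) (hGo : IsOpen G) (hG : Bornology.IsBounded G)
    (hL : HasLipschitzBoundaryD G) {θ : ℝ} (hθ0 : 0 < θ) (hθ : θ < 1 / 2) :
    GoodD θ G (fun _ => 1) := by
  have hex : ∀ x : closure G, ∃ δ w0 r, ChartD G (x : Ed d) δ w0 r :=
    fun x => chart_exists hd hGo hL x.2
  choose δ w0 r hc using hex
  have hK : IsCompact (closure G) := hG.isCompact_closure
  obtain ⟨J, hJ⟩ := hK.elim_finite_subcover (fun x : closure G => ball (x : Ed d) (δ x / 4))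
    (fun _ => isOpen_ball) (fun x hx => mem_iUnion.2 ⟨⟨x, hx⟩, mem_ball_self (by
      have := (hc ⟨x, hx⟩).hδ; positivity)⟩)
  let b : ∀ x : closure G, ContDiffBump (x : Ed d) := fun x =>
    ⟨δ x / 4, δ x / 2, by have := (hc x).hδ; positivity, by have := (hc x).hδ; linarith⟩
  have hbs : ∀ x, ContDiff ℝ (⊤ : ℕ∞) (b x) := fun x => (b x).contDiff
  have hprod : ∀ J : Finset (closure G), ContDiff ℝ (⊤ : ℕ∞) fun y => ∏ x ∈ J, (1 - b x y) :=
    fun J => contDiff_prod fun x _ => contDiff_const.sub (hbs x)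
  have Q : ∀ J : Finset (closure G), ∀ η : Ed d → ℝ, ContDiff ℝ (⊤ : ℕ∞) η →
      GoodD θ G fun y => η y * (1 - ∏ x ∈ J, (1 - b x y)) := by
    classical
    intro J
    induction J using Finset.induction_on with
    | empty => intro η _; simpa using good_zero θ
    | insert a J ha ih =>
      intro η hη
      have g1 : GoodD θ G fun y => η y * b a y := by
        refine chart_good hd hGo hG (hc a) (hη.mul (hbs a)) (fun y hy => ?_) hθ0 hθ
        have h1 : b a y ≠ 0 := right_ne_zero_of_mul hy
        have h2 : y ∈ Function.support (b a) := h1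
        rw [(b a).support_eq] at h2
        exact ball_subset_closedBall h2
      have g2 := ih (fun y => η y * (1 - b a y)) (hη.mul (contDiff_const.sub (hbs a)))
      have g3 := good_add hG (hη.mul (hbs a)).continuous
        ((hη.mul (contDiff_const.sub (hbs a))).mul (contDiff_const.sub (hprod J))).continuous g1 g2
      convert g3 using 2 with y
      rw [Finset.prod_insert ha]
      ring
  obtain ⟨C, hC, H⟩ := Q J (fun _ => 1) contDiff_const
  refine ⟨C, hC, fun i f g hf hg => ?_⟩
  have := H i f g hf hg
  convert this using 2
  refine setIntegral_congr_fun hGo.measurableSet fun y hy => ?_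
  have hy' := hJ (subset_closure hy)
  simp only [mem_iUnion] at hy'
  obtain ⟨x, hx, hyx⟩ := hy'
  have h1 : b x y = 1 := (b x).one_of_mem_closedBall (ball_subset_closedBall hyx)
  have h2 : ∏ x ∈ J, (1 - b x y) = 0 := Finset.prod_eq_zero hx (by rw [h1, sub_self])
  simp [h2]

end exist

section final

variable {d : ℕ} {G : Set (Ed d)}

lemma abs_opt {q C N M : ℝ} (hC : 0 < C) (hN : 0 ≤ N) (hM : 0 ≤ M)
    (h : ∀ l : ℝ, 0 < l → q ≤ C * (l ^ 2 * N + (l⁻¹) ^ 2 * M)) :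
    q ≤ 2 * C * Real.sqrt N * Real.sqrt M := by
  set a := Real.sqrt N with ha
  set b := Real.sqrt M with hb
  have ha0 : 0 ≤ a := Real.sqrt_nonneg _
  have hb0 : 0 ≤ b := Real.sqrt_nonneg _
  have haN : N = a ^ 2 := (Real.sq_sqrt hN).symm
  have hbM : M = b ^ 2 := (Real.sq_sqrt hM).symm
  have key : ∀ ε : ℝ, 0 < ε → q ≤ C * (2 * a * b + ε * (a + b)) := by
    intro ε hε
    have hμ : 0 < (b + ε) / (a + ε) := by positivity
    have h1 := h (Real.sqrt ((b + ε) / (a + ε))) (Real.sqrt_pos.2 hμ)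
    rw [inv_pow, Real.sq_sqrt hμ.le, haN, hbM] at h1
    refine h1.trans ?_
    have e1 : (b + ε) / (a + ε) * a ^ 2 ≤ (b + ε) * a := by
      rw [div_mul_eq_mul_div, div_le_iff₀ (by positivity)]
      have : 0 ≤ (b + ε) * a * ε := by positivity
      nlinarith
    have e2 : ((b + ε) / (a + ε))⁻¹ * b ^ 2 ≤ (a + ε) * b := by
      rw [inv_div, div_mul_eq_mul_div, div_le_iff₀ (by positivity)]
      have : 0 ≤ (a + ε) * b * ε := by positivity
      nlinarith
    refine mul_le_mul_of_nonneg_left ?_ hC.le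
    linarith
  have hlim : Tendsto (fun ε : ℝ => C * (2 * a * b + ε * (a + b))) (𝓝[>] 0)
      (𝓝 (C * (2 * a * b + 0 * (a + b)))) := by
    refine Tendsto.mono_left (Continuous.tendsto ?_ 0) nhdsWithin_le_nhds
    fun_prop
  have := ge_of_tendsto hlim (by
    filter_upwards [self_mem_nhdsWithin] with ε hε using key ε hε)
  linarith

lemma gag_smul (s l : ℝ) (v : Ed d → ℝ) :
    gagSqD d s G (fun x => l * v x) = l ^ 2 * gagSqD d s G v := by
  unfold gagSqD
  rw [← integral_const_mul]
  congr 1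
  ext x
  rw [← integral_const_mul]
  congr 1
  ext y
  ring

lemma sq_smul (l : ℝ) (v : Ed d → ℝ) :
    ∫ x in G, (l * v x) ^ 2 = l ^ 2 * ∫ x in G, v x ^ 2 := by
  rw [← integral_const_mul]
  congr 1
  ext x
  ring

lemma pd_smul {f : Ed d → ℝ} (hf : ContDiff ℝ (⊤ : ℕ∞) f) (i : Fin d) (l : ℝ) (x : Ed d) :
    pdD i (fun x => l * f x) x = l * pdD i f x := by
  unfold pdD
  rw [fderiv_const_mul (hf.differentiable (by simp) x)]
  simp

/-- Square of the norm of `f`. -/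
def NfD (θ : ℝ) (G : Set (Ed d)) (f : Ed d → ℝ) : ℝ := (∫ x in G, (f x) ^ 2) +
  if θ = 0 then ∑ k : Fin d, ∫ x in G, (pdD k f x) ^ 2 else gagSqD d (1 - θ) G f

/-- Square of the norm of `g`. -/
def MgD (θ : ℝ) (G : Set (Ed d)) (g : Ed d → ℝ) : ℝ := (∫ x in G, (g x) ^ 2) +
  if θ = 0 then 0 else gagSqD d θ G g

lemma NfD_nonneg (θ : ℝ) (f : Ed d → ℝ) : 0 ≤ NfD θ G f := by
  unfold NfD
  refine add_nonneg (integral_nonneg fun _ => sq_nonneg _) ?_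
  split_ifs
  · exact Finset.sum_nonneg fun _ _ => integral_nonneg fun _ => sq_nonneg _
  · exact gagSqD_nonneg _ _ _

lemma MgD_nonneg (θ : ℝ) (g : Ed d → ℝ) : 0 ≤ MgD θ G g := by
  unfold MgD
  refine add_nonneg (integral_nonneg fun _ => sq_nonneg _) ?_
  split_ifs
  · exact le_rfl
  · exact gagSqD_nonneg _ _ _

lemma NfD_smul (θ l : ℝ) {f : Ed d → ℝ} (hf : ContDiff ℝ (⊤ : ℕ∞) f) :
    NfD θ G (fun x => l * f x) = l ^ 2 * NfD θ G f := by
  unfold NfD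
  rw [sq_smul, mul_add]
  congr 1
  split_ifs
  · rw [Finset.mul_sum]
    refine Finset.sum_congr rfl fun k _ => ?_
    simp_rw [pd_smul hf]
    rw [sq_smul]
  · rw [gag_smul]

lemma MgD_smul (θ l : ℝ) (g : Ed d → ℝ) :
    MgD θ G (fun x => l * g x) = l ^ 2 * MgD θ G g := by
  unfold MgD
  rw [sq_smul, mul_add]
  congr 1
  split_ifs
  · simp
  · rw [gag_smul]

lemma base_bound (hd : 1 ≤ d) (hGo : IsOpen G) (hG : Bornology.IsBounded G)
    (hL : HasLipschitzBoundaryD G) {θ : ℝ} (hθ0 : 0 ≤ θ) (hθ : θ < 1 / 2) :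
    ∃ C : ℝ, 0 < C ∧ ∀ (i : Fin d) (f g : Ed d → ℝ),
      ContDiff ℝ (⊤ : ℕ∞) f → ContDiff ℝ (⊤ : ℕ∞) g →
      |∫ x in G, pdD i f x * g x| ≤ C * (NfD θ G f + MgD θ G g) := by
  rcases hθ0.eq_or_lt with h0 | h0
  · subst h0
    refine ⟨1, one_pos, fun i f g hf hg => ?_⟩
    have hp : Continuous (pdD i f) := (hf.continuous_fderiv (by simp)).clm_apply continuous_const
    have hgc := hg.continuous
    have h1 : |∫ x in G, pdD i f x * g x| ≤ (∫ x in G, pdD i f x ^ 2) + ∫ x in G, g x ^ 2 := by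
      refine abs_integral_le_integral_abs.trans ?_
      have i1 := cont_integrableOn hG (by fun_prop : Continuous fun x => pdD i f x ^ 2)
      have i2 := cont_integrableOn hG (by fun_prop : Continuous fun x => g x ^ 2)
      have i3 := cont_integrableOn hG (by fun_prop : Continuous fun x => |pdD i f x * g x|)
      rw [← integral_add i1 i2]
      refine integral_mono i3 (i1.add i2) fun x => ?_
      simp only
      rw [abs_mul, ← sq_abs (pdD i f x), ← sq_abs (g x)]
      nlinarith [sq_nonneg (|pdD i f x| - |g x|), sq_nonneg (|pdD i f x|), sq_nonneg (|g x|)]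
    have h2 : ∫ x in G, pdD i f x ^ 2 ≤ ∑ k : Fin d, ∫ x in G, (pdD k f x) ^ 2 :=
      Finset.single_le_sum (f := fun k => ∫ x in G, (pdD k f x) ^ 2)
        (fun k _ => integral_nonneg fun _ => sq_nonneg _) (Finset.mem_univ i)
    have h3 : 0 ≤ ∫ x in G, f x ^ 2 := integral_nonneg fun _ => sq_nonneg _
    simp only [NfD, MgD, if_true]
    linarith
  · obtain ⟨C, hC, H⟩ := good_one hd hGo hG hL h0 hθ
    refine ⟨C, hC, fun i f g hf hg => ?_⟩
    have := H i f g hf hg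
    simpa [NfD, MgD, h0.ne'] using this

end final

/-- **Lemma 2.6 (Nečas)**: for `0 ≤ θ < 1/2` and a bounded Lipschitz domain `G ⊆ ℝ^d`
there is `C` with `∫_G (∂f/∂x_i) g ≤ C ‖f‖_{1−θ,G} ‖g‖_{θ,G}` for all smooth `f, g`.
Here `‖·‖_{0,G}` is the `L²` norm, `‖·‖_{1,G}` the `H¹` norm and, for `0 < r < 1`,
`‖v‖_{r,G} = (‖v‖²_{L²(G)} + |v|²_{r,G})^{1/2}`. -/
theorem necas_derivative_bound (d : ℕ) (hd : 1 ≤ d) (θ : ℝ) (hθ0 : 0 ≤ θ)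
    (hθ : θ < 1 / 2)
    (G : Set (Ed d)) (hGopen : IsOpen G) (hGconn : IsConnected G)
    (hGbdd : Bornology.IsBounded G) (hGlip : HasLipschitzBoundaryD G) :
    ∃ C : ℝ, 0 < C ∧ ∀ (i : Fin d) (f g : Ed d → ℝ),
      ContDiff ℝ (⊤ : ℕ∞) f → ContDiff ℝ (⊤ : ℕ∞) g →
      |∫ x in G, pdD i f x * g x| ≤
        C * Real.sqrt ((∫ x in G, (f x) ^ 2) +
              if θ = 0 then ∑ k : Fin d, ∫ x in G, (pdD k f x) ^ 2
              else gagSqD d (1 - θ) G f) *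
          Real.sqrt ((∫ x in G, (g x) ^ 2) +
              if θ = 0 then 0 else gagSqD d θ G g) := by
  obtain ⟨C, hC, H⟩ := base_bound hd hGopen hGbdd hGlip hθ0 hθ
  refine ⟨2 * C, by positivity, fun i f g hf hg => ?_⟩
  refine abs_opt hC (NfD_nonneg θ f) (MgD_nonneg θ g) fun l hl => ?_
  have h1 := H i (fun x => l * f x) (fun x => l⁻¹ * g x) (contDiff_const.mul hf)
    (contDiff_const.mul hg)
  rw [NfD_smul θ l hf, MgD_smul] at h1
  have h2 : ∫ x in G, pdD i (fun x => l * f x) x * (l⁻¹ * g x) = ∫ x in G, pdD i f x * g x := by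
    congr 1
    ext x
    rw [pd_smul hf]
    field_simp
  rwa [h2] at h1

end
end
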